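/- arXiv:2209.11014 — 2 statements merged into one kernel-verified Lean document; each statement's English description precedes it below -/
import Mathlib

section
/- Fix integers n ≥ 1 and m ≥ 2 and α ∈ (0,1). Let W̄₀ be an mn×mn matrix satisfying Assumptions 1–3 with zero diagonal blocks, normalized so that 1/m is the largest eigenvalue of W̄₀Λ, this eigenvalue is simple, and its eigenspace is not contained in span{ε_k ⊗ 𝟙_m}; let p₁ = (p_{1,rt}) (1 ≤ r ≤ n, 1 ≤ t ≤ m) be a corresponding unit eigenvector. Suppose ḡ_a > mα² and that one of the following holds: (a) m = 2; (b) m = 3 and ḡ_a ≥ m(1+α)²; (c) m ≥ 4, ḡ_a ≥ m(1+α)², and (3/m)·Σ_{r=1}^n (Σ_{t=1}^m p_{1,rt}²)² ≥ Σ_{r=1}^n Σ_{t=1}^m p_{1,rt}⁴. Then for every ε > 0 there exists δ > 0 such that for every μ₁ ∈ (m(1+α), m(1+α)+δ), the system s̄' = μ₁ W̄₀ f̄(s̄) − s̄ − ā, ā' = ḡ_a f̄(s̄) − α ā on ℝ^{mn}×ℝ^{mn} has a nonconstant periodic solution t ↦ (s̄(t), ā(t)) (i.e., there is T > 0 with (s̄(t+T),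 ā(t+T)) = (s̄(t), ā(t)) for all t, and the solution is not constant) whose orbit is contained in the open ball of radius ε centered at the origin. -/
open scoped BigOperators
open Matrix

/-- The blockwise softmax `f : ℝ^{mn} → ℝ^{mn}`,
`f(s)_{ij} = exp(s_{ij}) / ∑_{l=1}^m exp(s_{il})`. -/
noncomputable def softmax (n m : ℕ) (s : Fin n × Fin m → ℝ) : Fin n × Fin m → ℝ :=
  fun p => Real.exp (s p) / ∑ l : Fin m, Real.exp (s (p.1, l))

/-- The centered blockwise softmax `f̄(s) = f(s) − (1/m)𝟙`. -/
noncomputable def fbar (n m : ℕ) (s : Fin n × Fin m → ℝ) : Fin n × Fin m → ℝ :=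
  fun p => softmax n m s p - 1 / m

/-- The matrix `Λ = Iₙ ⊗ ((1/m)Iₘ − (1/m²)𝟙ₘ𝟙ₘᵀ)`, written entrywise. -/
noncomputable def Lam (n m : ℕ) : Matrix (Fin n × Fin m) (Fin n × Fin m) ℝ :=
  Matrix.of fun p q =>
    if p.1 = q.1 then (if p.2 = q.2 then 1 / (m : ℝ) else 0) - 1 / (m : ℝ) ^ 2 else 0

/-!
The linearization of the field at the origin involves `W` only through its compression to the
vectors of blockwise mean zero. Along the eigenvector `p` that compression acts as the identity, so
after scaling the parameter by `m` the critical value is `1 + α`, where `p` carries a simple pair of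
eigenvalues `±ω i` with `ω² = g / m - α²`, all other modes being damped. Adding the blockwise mean
to the centered softmax makes its linear part the identity, so that the field becomes an instance
of `s' = h • M (Φ s) - s - a`, `a' = g • Φ s - α • a` with `Φ s = s + quadratic + cubic + ⋯` and
`M` symmetric. The added mean cannot create cycles: blockwise means of cycles satisfy a damped
linear system and vanish.

For the abstract system the branch of cycles is constructed by blowing up the periodic problem. On
a circle of length `2π` substitute `r • (critical orbit) + r² • (second harmonics) + r³ • u`, where
the second harmonics solve the quadratic order exactly. The `r²`-corrections of the frequency and
of the parameter are read off from the components along `p` of `u` at time `0`; this replaces the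
phase and amplitude conditions and makes the linearized problem injective. Applying `(d/dt + 1)⁻¹`
turns it into the identity plus a compact operator, hence into an isomorphism, and the implicit
function theorem gives the branch in `r`.

Pairing the cubic order with the adjoint harmonic determines the parameter correction. It has two
contributions: the cubic coefficient of the softmax along `p`, nonpositive by the quartic
inequality, and the feedback of the second harmonics, negative for each mode when
`(1 + α)² ≤ g / m`. For `m = 2` the quadratic terms vanish identically and only the cubic one is
left. So in all cases the correction is positive and the branch lies above the critical value.
-/

section Resolvent

variable {T : ℝ} {F : Type*} [NormedAddCommGroup F] [NormedSpace ℝ F]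

/-- The `T`-periodic solution `u` of `u' + u = v`, namely
`u θ = (1 - e⁻ᵀ)⁻¹ ∫₀ᵀ e⁻ˣ v (θ - x) dx`, as a plain function on the circle. -/
noncomputable def circleResolventFun (v : C(AddCircle T, F)) (θ : AddCircle T) : F :=
  (1 - Real.exp (-T))⁻¹ • ∫ x in (0 : ℝ)..T, Real.exp (-x) • v (θ - (x : AddCircle T))

theorem continuous_comp_addCircle_coe {X : Type*} [TopologicalSpace X] (v : C(AddCircle T, X)) :
    Continuous fun x : ℝ => v (x : AddCircle T) :=
  v.continuous.comp (AddCircle.continuous_mk' T)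

theorem continuous_circleResolventFun (v : C(AddCircle T, F)) :
    Continuous (circleResolventFun v) := by
  refine Continuous.const_smul
    (intervalIntegral.continuous_parametric_intervalIntegral_of_continuous' ?_ _ _) _
  have : Continuous fun p : AddCircle T × ℝ => (p.2 : AddCircle T) :=
    (AddCircle.continuous_mk' T).comp continuous_snd
  simp only [Function.uncurry_def]
  fun_prop

theorem intervalIntegrable_exp_neg_smul_comp_sub (v : C(AddCircle T, F)) (θ : AddCircle T)
    (a b : ℝ) :
    IntervalIntegrable (fun x : ℝ => Real.exp (-x) • v (θ - (x : AddCircle T)))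
      MeasureTheory.volume a b := by
  have : Continuous fun x : ℝ => (x : AddCircle T) := AddCircle.continuous_mk' T
  exact Continuous.intervalIntegrable (by fun_prop) _ _

theorem one_sub_exp_neg_pos (hT : 0 < T) : 0 < 1 - Real.exp (-T) :=
  sub_pos.2 (Real.exp_lt_one_iff.2 (neg_neg_of_pos hT))

theorem norm_circleResolventFun_le [hT : Fact (0 < T)] (v : C(AddCircle T, F)) (θ : AddCircle T) :
    ‖circleResolventFun v θ‖ ≤ ‖v‖ := by
  have hpos := one_sub_exp_neg_pos hT.out
  rw [circleResolventFun, norm_smul, Real.norm_of_nonneg (inv_pos.2 hpos).le, inv_mul_le_iff₀ hpos]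
  calc ‖∫ x in (0 : ℝ)..T, Real.exp (-x) • v (θ - (x : AddCircle T))‖
      ≤ ∫ x in (0 : ℝ)..T, Real.exp (-x) * ‖v‖ := by
        refine intervalIntegral.norm_integral_le_of_norm_le hT.out.le
          (Filter.Eventually.of_forall fun x _ => ?_)
          (Continuous.intervalIntegrable (by fun_prop) _ _)
        rw [norm_smul, Real.norm_of_nonneg (Real.exp_pos _).le]
        exact mul_le_mul_of_nonneg_left (v.norm_coe_le_norm _) (Real.exp_pos _).le
    _ = (1 - Real.exp (-T)) * ‖v‖ := by
        rw [intervalIntegral.integral_mul_const, intervalIntegral.integral_comp_neg, integral_exp,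
          neg_zero, Real.exp_zero]

/-- The resolvent `(d/dt + 1)⁻¹` as a bounded operator on the `T`-periodic continuous functions. -/
noncomputable def circleResolvent (T : ℝ) [Fact (0 < T)] (F : Type*) [NormedAddCommGroup F]
    [NormedSpace ℝ F] : C(AddCircle T, F) →L[ℝ] C(AddCircle T, F) :=
  LinearMap.mkContinuous
    { toFun := fun v => ⟨circleResolventFun v, continuous_circleResolventFun v⟩
      map_add' := fun u v => by
        ext θ
        simp only [ContinuousMap.coe_mk, ContinuousMap.add_apply, circleResolventFun, smul_add]
        rw [intervalIntegral.integral_add (intervalIntegrable_exp_neg_smul_comp_sub u θ _ _)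
          (intervalIntegrable_exp_neg_smul_comp_sub v θ _ _), smul_add]
      map_smul' := fun c v => by
        ext θ
        simp only [ContinuousMap.coe_mk, ContinuousMap.smul_apply, circleResolventFun,
          RingHom.id_apply, smul_comm _ c, intervalIntegral.integral_smul] }
    1 fun v => by
      rw [one_mul, ContinuousMap.norm_le _ (norm_nonneg _)]
      exact norm_circleResolventFun_le v

theorem exists_addCircle_coe_eq_abs_eq_norm (x : AddCircle T) :
    ∃ d : ℝ, (d : AddCircle T) = x ∧ |d| = ‖x‖ := by
  induction x using QuotientAddGroup.induction_on with | H d =>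
  refine ⟨d - round (T⁻¹ * d) * T, ?_, (AddCircle.norm_eq T).symm⟩
  rw [AddCircle.coe_sub, ← zsmul_eq_mul, AddCircle.coe_zsmul, AddCircle.coe_period, smul_zero,
    sub_zero]

theorem lipschitzWith_of_norm_deriv_le_of_addCircle {f : AddCircle T → F} {f' : ℝ → F}
    {C : NNReal} (hf : ∀ t : ℝ, HasDerivAt (fun t : ℝ => f t) (f' t) t)
    (hC : ∀ t, ‖f' t‖ ≤ C) : LipschitzWith C f := by
  refine LipschitzWith.of_dist_le_mul fun x y => ?_
  obtain ⟨d, hd, hd'⟩ := exists_addCircle_coe_eq_abs_eq_norm (x - y)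
  induction y using QuotientAddGroup.induction_on with | H y =>
  obtain rfl : x = ((y + d : ℝ) : AddCircle T) := by
    rw [AddCircle.coe_add, hd]
    exact (add_sub_cancel _ _).symm
  have h := Convex.norm_image_sub_le_of_norm_hasDerivWithin_le (s := Set.univ) (x := y)
    (fun t _ => (hf t).hasDerivWithinAt) (fun t _ => hC t) convex_univ
    (Set.mem_univ y) (Set.mem_univ (y + d))
  rw [add_sub_cancel_left, Real.norm_eq_abs, hd'] at h
  rwa [dist_eq_norm, dist_eq_norm]

variable [hT : Fact (0 < T)]

theorem norm_circleResolvent_apply_le (v : C(AddCircle T, F)) (θ : AddCircle T) :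
    ‖circleResolvent T F v θ‖ ≤ ‖v‖ :=
  norm_circleResolventFun_le v θ

theorem circleResolvent_apply_coe (v : C(AddCircle T, F)) (t : ℝ) :
    circleResolvent T F v (t : AddCircle T) = ((1 - Real.exp (-T))⁻¹ * Real.exp (-t)) •
      ∫ y in (t - T)..t, Real.exp y • v (y : AddCircle T) := by
  change circleResolventFun v (t : AddCircle T) = _
  have h := intervalIntegral.integral_comp_sub_left (a := 0) (b := T)
    (fun y : ℝ => Real.exp (-t) • Real.exp y • v (y : AddCircle T)) t
  rw [sub_zero] at h
  rw [circleResolventFun, mul_smul, ← intervalIntegral.integral_smul (Real.exp (-t)), ← h]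
  congr 1
  refine intervalIntegral.integral_congr fun x _ => ?_
  simp only [smul_smul, ← Real.exp_add, AddCircle.coe_sub]
  ring_nf

theorem hasDerivAt_integral_sub_const [CompleteSpace F] {g : ℝ → F} (hg : Continuous g)
    (c t : ℝ) : HasDerivAt (fun t => ∫ y in (t - c)..t, g y) (g t - g (t - c)) t := by
  have hG : ∀ t, HasDerivAt (fun t => ∫ y in (0 : ℝ)..t, g y) (g t) t := fun t =>
    hg.integral_hasStrictDerivAt 0 t |>.hasDerivAt
  refine ((hG t).sub ((hG (t - c)).comp_sub_const t c)).congr_of_eventuallyEq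
    (Filter.Eventually.of_forall fun s => ?_)
  exact (intervalIntegral.integral_interval_sub_left (hg.intervalIntegrable _ _)
    (hg.intervalIntegrable _ _)).symm

theorem hasDerivAt_circleResolvent [CompleteSpace F] (v : C(AddCircle T, F)) (t : ℝ) :
    HasDerivAt (fun t : ℝ => circleResolvent T F v (t : AddCircle T))
      (v (t : AddCircle T) - circleResolvent T F v (t : AddCircle T)) t := by
  have hne := (one_sub_exp_neg_pos hT.out).ne'
  have hc : Continuous fun y : ℝ => Real.exp y • v (y : AddCircle T) :=
    Real.continuous_exp.smul (continuous_comp_addCircle_coe v)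
  have hexp : HasDerivAt (fun t : ℝ => (1 - Real.exp (-T))⁻¹ * Real.exp (-t))
      (-((1 - Real.exp (-T))⁻¹ * Real.exp (-t))) t := by
    simpa using ((hasDerivAt_neg t).exp).const_mul (1 - Real.exp (-T))⁻¹
  have hv : v ((t - T : ℝ) : AddCircle T) = v t := by
    rw [AddCircle.coe_sub, AddCircle.coe_period, sub_zero]
  have hcoef : (1 - Real.exp (-T))⁻¹ * Real.exp (-t) * (Real.exp t - Real.exp (t - T)) = 1 := by
    rw [sub_eq_add_neg t, Real.exp_add, mul_assoc, ← mul_one_sub, ← mul_assoc (Real.exp (-t)),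
      ← Real.exp_add, neg_add_cancel, Real.exp_zero, one_mul, inv_mul_cancel₀ hne]
  refine ((hexp.smul (hasDerivAt_integral_sub_const hc T t)).congr_of_eventuallyEq
    (Filter.Eventually.of_forall (circleResolvent_apply_coe v))).congr_deriv ?_
  rw [hv, ← sub_smul, smul_smul, hcoef, one_smul, neg_smul, ← circleResolvent_apply_coe,
    ← sub_eq_add_neg]

theorem lipschitzWith_circleResolvent [CompleteSpace F] (v : C(AddCircle T, F)) (hv : ‖v‖ ≤ 1) :
    LipschitzWith 2 (circleResolvent T F v) := by
  refine lipschitzWith_of_norm_deriv_le_of_addCircle (hasDerivAt_circleResolvent v) fun t => ?_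
  have h1 := v.norm_coe_le_norm (t : AddCircle T)
  have h2 := norm_circleResolvent_apply_le v (t : AddCircle T)
  exact (norm_sub_le _ _).trans (by norm_num; linarith)

theorem isCompact_closure_of_forall_norm_le_of_lipschitzWith {X : Type*} [MetricSpace X]
    [CompactSpace X] [ProperSpace F] {A : Set C(X, F)} {C : NNReal} {R : ℝ}
    (hR : ∀ f ∈ A, ∀ x, ‖f x‖ ≤ R) (hC : ∀ f ∈ A, LipschitzWith C f) : IsCompact (closure A) := by
  set e := (ContinuousMap.linearIsometryBoundedOfCompact X F ℝ).toHomeomorph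
  have hcomp : IsCompact (closure (e '' A)) := by
    refine BoundedContinuousFunction.arzela_ascoli (Metric.closedBall (0 : F) R)
      (isCompact_closedBall _ _) _ ?_ (LipschitzWith.uniformEquicontinuous _ C ?_).equicontinuous
    · rintro _ x ⟨f, hf, rfl⟩
      exact mem_closedBall_zero_iff.2 (hR f hf x)
    · rintro ⟨_, f, hf, rfl⟩
      exact hC f hf
  rw [e.isClosedEmbedding.isInducing.closure_eq_preimage_closure_image]
  exact e.isClosedEmbedding.isCompact_preimage hcomp

theorem isCompactOperator_circleResolvent [FiniteDimensional ℝ F] :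
    IsCompactOperator (circleResolvent T F) := by
  have : CompleteSpace F := FiniteDimensional.complete ℝ F
  have : ProperSpace F := FiniteDimensional.proper_real F
  refine (isCompactOperator_iff_isCompact_closure_image_closedBall
    (circleResolvent T F).toLinearMap (r := 1) one_pos).2 ?_
  refine isCompact_closure_of_forall_norm_le_of_lipschitzWith (R := 1) (C := 2) ?_ ?_
  · rintro _ ⟨v, hv, rfl⟩ θ
    exact (norm_circleResolvent_apply_le v θ).trans (mem_closedBall_zero_iff.1 hv)
  · rintro _ ⟨v, hv, rfl⟩
    exact lipschitzWith_circleResolvent v (mem_closedBall_zero_iff.1 hv)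

end Resolvent

section ExpTail

variable (A : Type*) [NormedCommRing A] [NormedAlgebra ℝ A]

/-- The power series `∑ xⁿ / (n + 3)!` over a Banach algebra. -/
noncomputable def expTailSeries : FormalMultilinearSeries ℝ A A :=
  .ofScalars A fun n => ((n + 3).factorial : ℝ)⁻¹

variable {A}

/-- The remainder of the exponential after its quadratic term, divided by the cube: the entire
function with `exp x = 1 + x + x² / 2 + x³ * expTail x`. -/
noncomputable def expTail (x : A) : A :=
  (expTailSeries A).sum x

theorem radius_expTailSeries : (expTailSeries A).radius = ⊤ := by
  refine FormalMultilinearSeries.ofScalars_radius_eq_top_of_tendsto A _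
    (Filter.Eventually.of_forall fun n => inv_ne_zero (by positivity)) ?_
  have hratio (n : ℕ) : ‖((n.succ + 3).factorial : ℝ)⁻¹‖ / ‖((n + 3).factorial : ℝ)⁻¹‖
      = 1 / (((n + 3 : ℕ) : ℝ) + 1) := by
    rw [norm_inv, norm_inv, Real.norm_natCast, Real.norm_natCast, Nat.succ_add,
      Nat.factorial_succ]
    push_cast
    field_simp
  simp only [hratio]
  exact tendsto_one_div_add_atTop_nhds_zero_nat.comp (Filter.tendsto_add_atTop_nat 3)

variable [CompleteSpace A]

theorem hasFPowerSeriesOnBall_expTail :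
    HasFPowerSeriesOnBall (expTail : A → A) (expTailSeries A) 0 ⊤ :=
  radius_expTailSeries (A := A) ▸ (expTailSeries A).hasFPowerSeriesOnBall
    (radius_expTailSeries (A := A) ▸ ENNReal.zero_lt_top)

theorem contDiff_expTail {k : WithTop ℕ∞} : ContDiff ℝ k (expTail : A → A) := by
  have h := (hasFPowerSeriesOnBall_expTail (A := A)).analyticOnNhd
  rw [Metric.eball_top] at h
  exact h.contDiff

theorem hasSum_expTail (x : A) :
    HasSum (fun n : ℕ => ((n + 3).factorial : ℝ)⁻¹ • x ^ n) (expTail x) := by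
  simpa only [expTailSeries, FormalMultilinearSeries.ofScalars_apply_eq, zero_add] using
    hasFPowerSeriesOnBall_expTail.hasSum (y := x) (by simp)

theorem map_expTail {B : Type*} [NormedCommRing B] [NormedAlgebra ℝ B]
    [CompleteSpace B] (φ : A →ₐ[ℝ] B) (hφ : Continuous φ) (x : A) :
    φ (expTail x) = expTail (φ x) := by
  refine ((hasSum_expTail x).map φ hφ).unique ?_
  simpa only [Function.comp_def, map_smul, map_pow] using hasSum_expTail (φ x)

theorem exp_eq_add_expTail (x : ℝ) :
    Real.exp x = 1 + x + x ^ 2 / 2 + x ^ 3 * expTail x := by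
  have hexp := NormedSpace.exp_series_hasSum_exp' (𝕂 := ℝ) x
  rw [← Real.exp_eq_exp_ℝ] at hexp
  have htail : HasSum (fun n : ℕ => ((n + 3).factorial : ℝ)⁻¹ • x ^ (n + 3))
      (x ^ 3 * expTail x) := by
    refine ((hasSum_expTail x).mul_left (x ^ 3)).congr_fun fun n => ?_
    simp only [smul_eq_mul]
    ring
  have h := ((hasSum_nat_add_iff' 3).2 hexp).unique htail
  norm_num [Finset.sum_range_succ, Nat.factorial] at h
  linarith

end ExpTail

section Harmonics

/-- The circle of length `2π`, on which solutions of normalized period are defined. -/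
abbrev Circ : Type := AddCircle (2 * Real.pi)

instance Circ.fact_two_pi_pos : Fact (0 < 2 * Real.pi) := ⟨Real.two_pi_pos⟩

theorem continuousMap_circ_ext {X : Type*} [TopologicalSpace X] {f g : C(Circ, X)}
    (h : ∀ t : ℝ, f (t : Circ) = g (t : Circ)) : f = g := by
  ext θ
  induction θ using QuotientAddGroup.induction_on with | H t => exact h t

variable {F : Type*} [NormedAddCommGroup F] [NormedSpace ℝ F]

/-- The first harmonic `cos t • u + sin t • v`. -/
noncomputable def harmonic1 (u v : F) : C(Circ, F) where
  toFun := Function.Periodic.lift (f := fun t : ℝ => Real.cos t • u + Real.sin t • v)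
    fun t => by simp only [Real.cos_add_two_pi, Real.sin_add_two_pi]
  continuous_toFun := continuous_coinduced_dom.2 <|
    show Continuous fun t : ℝ => Real.cos t • u + Real.sin t • v by fun_prop

/-- The trigonometric polynomial `w + cos 2t • u + sin 2t • v`. -/
noncomputable def harmonic2 (w u v : F) : C(Circ, F) where
  toFun := Function.Periodic.lift
    (f := fun t : ℝ => w + Real.cos (2 * t) • u + Real.sin (2 * t) • v) fun t => by
      have h : 2 * (t + 2 * Real.pi) = 2 * t + 2 * Real.pi + 2 * Real.pi := by ring
      simp only [h, Real.cos_add_two_pi, Real.sin_add_two_pi]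
  continuous_toFun := continuous_coinduced_dom.2 <|
    show Continuous fun t : ℝ => w + Real.cos (2 * t) • u + Real.sin (2 * t) • v by fun_prop

@[simp] theorem harmonic1_coe (u v : F) (t : ℝ) :
    harmonic1 u v (t : Circ) = Real.cos t • u + Real.sin t • v := rfl

@[simp] theorem harmonic2_coe (w u v : F) (t : ℝ) :
    harmonic2 w u v (t : Circ) = w + Real.cos (2 * t) • u + Real.sin (2 * t) • v := rfl

theorem hasDerivAt_harmonic1 (u v : F) (t : ℝ) :
    HasDerivAt (fun t : ℝ => harmonic1 u v (t : Circ)) (harmonic1 v (-u) (t : Circ)) t := by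
  refine (((Real.hasDerivAt_cos t).smul_const u).add
    ((Real.hasDerivAt_sin t).smul_const v)).congr_deriv ?_
  simp only [harmonic1_coe]
  module

theorem hasDerivAt_harmonic2 (w u v : F) (t : ℝ) :
    HasDerivAt (fun t : ℝ => harmonic2 w u v (t : Circ))
      (harmonic2 0 ((2 : ℝ) • v) (-((2 : ℝ) • u)) (t : Circ)) t := by
  have h2 : HasDerivAt (fun t : ℝ => 2 * t) 2 t := by simpa using (hasDerivAt_id t).const_mul 2
  refine (((h2.cos.smul_const u).const_add w).add (h2.sin.smul_const v)).congr_deriv ?_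
  simp only [harmonic2_coe]
  module

end Harmonics

section Cycles

open scoped Topology

variable {E : Type*} [NormedAddCommGroup E] [NormedSpace ℝ E]

/-- `x` is a cycle of the vector field `f`: a nonconstant periodic solution of `x' = f x`. -/
structure IsCycle (f : E → E) (x : ℝ → E) : Prop where
  hasDerivAt : ∀ t, HasDerivAt x (f (x t)) t
  exists_period : ∃ T > 0, Function.Periodic x T
  nonconstant : ∃ t, x t ≠ x 0

/-- The family of vector fields `F` bifurcates at the parameter `μ₀` from the equilibrium `0` to
cycles that exist for parameters just above `μ₀` and shrink to `0` as the parameter tends to `μ₀`: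
the existence part of a supercritical Hopf bifurcation. -/
def BifurcatesToCycles (F : ℝ → E → E) (μ₀ : ℝ) : Prop :=
  ∀ N ∈ 𝓝 (0 : E), ∃ δ > 0, ∀ μ ∈ Set.Ioo μ₀ (μ₀ + δ), ∃ x, IsCycle (F μ) x ∧ ∀ t, x t ∈ N

theorem BifurcatesToCycles.rescale {F G : ℝ → E → E} {μ₀ c : ℝ} (h : BifurcatesToCycles F μ₀)
    (hc : 0 < c) (hFG : ∀ μ x, IsCycle (F μ) x → IsCycle (G (c * μ)) x) :
    BifurcatesToCycles G (c * μ₀) := by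
  intro N hN
  obtain ⟨δ, hδ, hx⟩ := h N hN
  refine ⟨c * δ, mul_pos hc hδ, fun μ hμ => ?_⟩
  obtain ⟨x, hx, hxN⟩ := hx (μ / c)
    ⟨(lt_div_iff₀' hc).2 hμ.1, (div_lt_iff₀' hc).2 (by rw [mul_add]; exact hμ.2)⟩
  exact ⟨x, mul_div_cancel₀ μ hc.ne' ▸ hFG _ _ hx, hxN⟩

theorem isCycle_of_hasDerivAt_circle {f : E → E} {u : C(Circ, E)} {w : ℝ} (hw : 0 < w)
    (hu : ∀ t : ℝ, HasDerivAt (fun t : ℝ => u t) (w⁻¹ • f (u t)) t)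
    (hne : u ((Real.pi : ℝ) : Circ) ≠ u ((0 : ℝ) : Circ)) :
    IsCycle f fun t => u ((w * t : ℝ) : Circ) where
  hasDerivAt t := by
    have h := (hu (w * t)).scomp t ((hasDerivAt_id t).const_mul w)
    rwa [mul_one, smul_inv_smul₀ hw.ne'] at h
  exists_period := by
    refine ⟨2 * Real.pi / w, div_pos Real.two_pi_pos hw, fun t => ?_⟩
    simp only [mul_add, mul_div_cancel₀ _ hw.ne', AddCircle.coe_add_period]
  nonconstant := by
    refine ⟨Real.pi / w, ?_⟩
    rwa [mul_div_cancel₀ _ hw.ne', mul_zero]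

theorem bifurcatesToCycles_of_branch {F : ℝ → E → E} {U : ℝ → C(Circ, E)} {w h : ℝ → ℝ}
    (hU : ContinuousAt U 0) (hw : ContinuousAt w 0) (hw0 : 0 < w 0)
    (hh : ∀ᶠ r in 𝓝 0, ContinuousAt h r) (hpos : ∀ᶠ r in 𝓝[>] 0, h 0 < h r)
    (hode : ∀ᶠ r in 𝓝[>] 0, ∀ t : ℝ,
      HasDerivAt (fun t : ℝ => (r • U r) t) ((w r)⁻¹ • F (h r) ((r • U r) t)) t)
    (hne : U 0 ((Real.pi : ℝ) : Circ) ≠ U 0 ((0 : ℝ) : Circ)) :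
    BifurcatesToCycles F (h 0) := by
  intro N hN
  obtain ⟨ε, hε, hball⟩ := Metric.mem_nhds_iff.1 hN
  have hsmall : ∀ᶠ r in 𝓝 (0 : ℝ), ‖r • U r‖ < ε := by
    have htendsto : ContinuousAt (fun r : ℝ => ‖r • U r‖) 0 := (continuousAt_id.smul hU).norm
    exact htendsto.eventually_lt continuousAt_const (by simpa using hε)
  have heval (θ : Circ) : ContinuousAt (fun r => U r θ) 0 :=
    (continuous_eval_const θ).continuousAt.comp hU
  have hgood := ((((heval _).ne_iff_eventually_ne (heval _)).1 hne).and
    ((continuousAt_const.eventually_lt hw hw0).and hsmall)).filter_mono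
      (nhdsWithin_le_nhds (s := Set.Ioi 0))
  obtain ⟨a, ha, hcont⟩ := Metric.eventually_nhds_iff.1 hh
  obtain ⟨b, hb, hIoo⟩ := mem_nhdsGT_iff_exists_Ioo_subset.1 (hpos.and (hode.and hgood))
  obtain ⟨ρ, hρ0, hρ⟩ := exists_between (lt_min ha hb)
  refine ⟨h ρ - h 0, sub_pos.2 (hIoo ⟨hρ0, hρ.trans_le (min_le_right _ _)⟩).1, fun μ hμ => ?_⟩
  have hcontOn : ContinuousOn h (Set.Icc 0 ρ) := fun r hr => (hcont (by
    rw [Real.dist_0_eq_abs, abs_of_nonneg hr.1]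
    exact hr.2.trans_lt (hρ.trans_le (min_le_left _ _)))).continuousWithinAt
  obtain ⟨r, ⟨hr0, hrρ⟩, rfl⟩ := intermediate_value_Ioo hρ0.le hcontOn
    (show μ ∈ Set.Ioo (h 0) (h ρ) by simpa using hμ)
  obtain ⟨-, hsol, hner, hwr, hnorm⟩ := hIoo ⟨hr0, hrρ.trans (hρ.trans_le (min_le_right _ _))⟩
  refine ⟨_, isCycle_of_hasDerivAt_circle hwr hsol ?_, fun t => hball ?_⟩
  · simpa only [ContinuousMap.smul_apply, ne_eq, smul_right_inj hr0.ne'] using hner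
  · exact mem_ball_zero_iff.2 (((r • U r).norm_coe_le_norm _).trans_lt hnorm)

end Cycles

section PlanarSystems

theorem eq_of_antitone_of_periodic {f : ℝ → ℝ} {T : ℝ} (hT : 0 < T) (hf : Antitone f)
    (hp : Function.Periodic f T) (s t : ℝ) : f s = f t := by
  have hle (s t : ℝ) : f s ≤ f t := by
    obtain ⟨k, hk⟩ := Archimedean.arch (t - s) hT
    rw [← hp.nsmul k s]
    exact hf (by linarith)
  exact le_antisymm (hle s t) (hle t s)

theorem eq_zero_of_periodic_of_damped {τ D T : ℝ} (hT : 0 < T) (hτ : τ < 0) (hD : D ≠ 0)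
    {y v : ℝ → ℝ} (hy : ∀ t, HasDerivAt y (v t) t)
    (hv : ∀ t, HasDerivAt v (τ * v t - D * y t) t)
    (hyp : Function.Periodic y T) (hvp : Function.Periodic v T) (t : ℝ) : y t = 0 := by
  set energy : ℝ → ℝ := fun t => v t ^ 2 + D * y t ^ 2 with henergy
  have hderiv (t : ℝ) : HasDerivAt energy (2 * τ * v t ^ 2) t := by
    refine (((hv t).pow 2).add (((hy t).pow 2).const_mul D)).congr_deriv ?_
    push_cast
    ring
  have hconst : energy = fun _ => energy 0 := funext fun t =>
    eq_of_antitone_of_periodic hT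
      (antitone_of_hasDerivAt_nonpos hderiv fun t =>
        mul_nonpos_of_nonpos_of_nonneg (by linarith) (sq_nonneg _))
      (fun t => by simp only [henergy, hyp t, hvp t]) t 0
  have hv0 : v = fun _ => 0 := funext fun t => by
    have h := hderiv t
    rw [hconst] at h
    simpa [hτ.ne] using h.unique (hasDerivAt_const t (energy 0))
  have h := hv t
  rw [hv0] at h
  simpa [hD] using h.unique (hasDerivAt_const t 0)

theorem eq_zero_of_periodic_of_trace_neg {a b c d T : ℝ} (hT : 0 < T) (htr : a + d < 0)
    (hdet : a * d - b * c ≠ 0) {ξ η : ℝ → ℝ}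
    (hξ : ∀ t, HasDerivAt ξ (a * ξ t + b * η t) t) (hη : ∀ t, HasDerivAt η (c * ξ t + d * η t) t)
    (hξp : Function.Periodic ξ T) (hηp : Function.Periodic η T) (t : ℝ) : ξ t = 0 ∧ η t = 0 := by
  constructor
  · refine eq_zero_of_periodic_of_damped hT htr hdet hξ (fun t => ?_) hξp
      (fun t => by simp only [hξp t, hηp t]) t
    refine (((hξ t).const_mul a).add ((hη t).const_mul b)).congr_deriv ?_
    ring
  · refine eq_zero_of_periodic_of_damped hT htr hdet hη (fun t => ?_) hηp
      (fun t => by simp only [hξp t, hηp t]) t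
    refine (((hξ t).const_mul c).add ((hη t).const_mul d)).congr_deriv ?_
    ring

theorem eq_zero_of_planar_of_initial_eq_zero {a b c d : ℝ} {ξ η : ℝ → ℝ}
    (hξ : ∀ t, HasDerivAt ξ (a * ξ t + b * η t) t) (hη : ∀ t, HasDerivAt η (c * ξ t + d * η t) t)
    (hξ0 : ξ 0 = 0) (hη0 : η 0 = 0) (t : ℝ) : ξ t = 0 ∧ η t = 0 := by
  let fst := ContinuousLinearMap.fst ℝ ℝ ℝ
  let snd := ContinuousLinearMap.snd ℝ ℝ ℝ
  let L : ℝ × ℝ →L[ℝ] ℝ × ℝ := (a • fst + b • snd).prod (c • fst + d • snd)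
  have hzero : (fun t => (ξ t, η t)) = 0 :=
    ODE_solution_unique_univ (v := fun _ => L) (s := fun _ => Set.univ) (t₀ := 0)
      (fun _ => L.lipschitz.lipschitzOnWith)
      (fun t => ⟨(hξ t).prodMk (hη t), Set.mem_univ _⟩)
      (fun t => ⟨by simp, Set.mem_univ _⟩)
      (Prod.ext hξ0 hη0)
  exact Prod.mk_eq_zero.1 (congrFun hzero t)

theorem integral_forcing_mul_adjoint_eq_zero {a b c d T : ℝ} {ξ η y z F G : ℝ → ℝ}
    (hF : Continuous F) (hG : Continuous G)
    (hξ : ∀ t, HasDerivAt ξ (a * ξ t + b * η t + F t) t)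
    (hη : ∀ t, HasDerivAt η (c * ξ t + d * η t + G t) t)
    (hy : ∀ t, HasDerivAt y (-(a * y t + c * z t)) t)
    (hz : ∀ t, HasDerivAt z (-(b * y t + d * z t)) t)
    (hξT : ξ T = ξ 0) (hηT : η T = η 0) (hyT : y T = y 0) (hzT : z T = z 0) :
    ∫ t in (0 : ℝ)..T, (F t * y t + G t * z t) = 0 := by
  have hyc : Continuous y := continuous_iff_continuousAt.2 fun t => (hy t).continuousAt
  have hzc : Continuous z := continuous_iff_continuousAt.2 fun t => (hz t).continuousAt
  rw [intervalIntegral.integral_eq_sub_of_hasDerivAt (f := fun t => ξ t * y t + η t * z t)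
    (fun t _ => ?_) (Continuous.intervalIntegrable (by fun_prop) _ _)]
  · rw [hξT, hηT, hyT, hzT, sub_self]
  · refine (((hξ t).mul (hy t)).add ((hη t).mul (hz t))).congr_deriv ?_
    ring

end PlanarSystems

section CriticalPlanarSystem

open Real

theorem integral_forcing_eq_zero_of_center {ω α : ℝ} (hω : ω ≠ 0) {ξ η F G : ℝ → ℝ}
    (hF : Continuous F) (hG : Continuous G)
    (hξ : ∀ t, HasDerivAt ξ (ω⁻¹ * (α * ξ t - η t + F t)) t)
    (hη : ∀ t, HasDerivAt η (ω⁻¹ * ((ω ^ 2 + α ^ 2) * ξ t - α * η t + G t)) t)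
    (hξp : ξ (2 * π) = ξ 0) (hηp : η (2 * π) = η 0) :
    ∫ t in (0 : ℝ)..2 * π, (F t * (ω * cos t - α * sin t) + G t * sin t) = 0 ∧
    ∫ t in (0 : ℝ)..2 * π, (F t * (-(ω * sin t) - α * cos t) + G t * cos t) = 0 := by
  have hortho {y z : ℝ → ℝ}
      (hy : ∀ t, HasDerivAt y (-(ω⁻¹ * (α * y t + (ω ^ 2 + α ^ 2) * z t))) t)
      (hz : ∀ t, HasDerivAt z (ω⁻¹ * (y t + α * z t)) t)
      (hyp : y (2 * π) = y 0) (hzp : z (2 * π) = z 0) :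
      ∫ t in (0 : ℝ)..2 * π, (F t * y t + G t * z t) = 0 := by
    have h := integral_forcing_mul_adjoint_eq_zero (a := ω⁻¹ * α) (b := -ω⁻¹)
      (c := ω⁻¹ * (ω ^ 2 + α ^ 2)) (d := -(ω⁻¹ * α)) (hF.const_mul ω⁻¹) (hG.const_mul ω⁻¹)
      (fun t => (hξ t).congr_deriv (by ring)) (fun t => (hη t).congr_deriv (by ring))
      (fun t => (hy t).congr_deriv (by ring)) (fun t => (hz t).congr_deriv (by ring))
      hξp hηp hyp hzp
    simp only [mul_assoc, ← mul_add, intervalIntegral.integral_const_mul] at h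
    exact (mul_eq_zero.1 h).resolve_left (inv_ne_zero hω)
  constructor
  · refine hortho (fun t => ?_) (fun t => (hasDerivAt_sin t).congr_deriv ?_) (by simp) (by simp)
    · refine (((hasDerivAt_cos t).const_mul ω).sub
        ((hasDerivAt_sin t).const_mul α)).congr_deriv ?_
      field_simp
      ring
    · field_simp
      ring
  · refine hortho (fun t => ?_) (fun t => (hasDerivAt_cos t).congr_deriv ?_) (by simp) (by simp)
    · refine (((hasDerivAt_sin t).const_mul ω).neg.sub
        ((hasDerivAt_cos t).const_mul α)).congr_deriv ?_
      field_simp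
      ring
    · field_simp
      ring

variable {ω α c d : ℝ} {ξ η ν : ℝ → ℝ}

theorem detuning_mul_add_integral_eq_zero (hω : ω ≠ 0) (hν : Continuous ν)
    (hξ : ∀ t, HasDerivAt ξ
      (ω⁻¹ * (α * ξ t - η t + (d * cos t + c * sin t + (1 + α) * ν t))) t)
    (hη : ∀ t, HasDerivAt η (ω⁻¹ * ((ω ^ 2 + α ^ 2) * ξ t - α * η t +
      (-(c * (ω * cos t - α * sin t)) + (ω ^ 2 + α ^ 2) * ν t))) t)
    (hξp : ξ (2 * π) = ξ 0) (hηp : η (2 * π) = η 0) :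
    d * (π * ω) +
      ∫ t in (0 : ℝ)..2 * π, ν t * ((1 + α) * ω * cos t + (ω ^ 2 - α) * sin t) = 0 := by
  have hsplit (t : ℝ) : (d * cos t + c * sin t + (1 + α) * ν t) * (ω * cos t - α * sin t) +
      (-(c * (ω * cos t - α * sin t)) + (ω ^ 2 + α ^ 2) * ν t) * sin t =
      d * ω * cos t ^ 2 - d * α * (sin t * cos t) +
        ν t * ((1 + α) * ω * cos t + (ω ^ 2 - α) * sin t) := by
    ring
  have h := (integral_forcing_eq_zero_of_center hω (by fun_prop) (by fun_prop) hξ hη hξp hηp).1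
  simp only [hsplit] at h
  rw [intervalIntegral.integral_add (Continuous.intervalIntegrable (by fun_prop) _ _)
      (Continuous.intervalIntegrable (by fun_prop) _ _),
    intervalIntegral.integral_sub (Continuous.intervalIntegrable (by fun_prop) _ _)
      (Continuous.intervalIntegrable (by fun_prop) _ _),
    intervalIntegral.integral_const_mul, intervalIntegral.integral_const_mul, integral_cos_sq,
    integral_sin_mul_cos₁] at h
  simp only [cos_two_pi, sin_two_pi, cos_zero, sin_zero] at h
  linear_combination h

theorem frequencyShift_eq_zero (hω : ω ≠ 0)
    (hξ : ∀ t, HasDerivAt ξ (ω⁻¹ * (α * ξ t - η t + c * sin t)) t)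
    (hη : ∀ t, HasDerivAt η
      (ω⁻¹ * ((ω ^ 2 + α ^ 2) * ξ t - α * η t + -(c * (ω * cos t - α * sin t)))) t)
    (hξp : ξ (2 * π) = ξ 0) (hηp : η (2 * π) = η 0) : c = 0 := by
  have hconst (t : ℝ) : c * sin t * (-(ω * sin t) - α * cos t) +
      -(c * (ω * cos t - α * sin t)) * cos t = -(c * ω) := by
    linear_combination -(c * ω) * sin_sq_add_cos_sq t
  have h := (integral_forcing_eq_zero_of_center hω (by fun_prop) (by fun_prop) hξ hη hξp hηp).2
  simp only [hconst, intervalIntegral.integral_const, sub_zero, smul_eq_mul, mul_neg, neg_eq_zero,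
    mul_eq_zero, two_pi_pos.ne', false_or] at h
  exact h.resolve_right hω

theorem integral_cubic_forcing (a k β₀ β₂ γ κ : ℝ) :
    ∫ t in (0 : ℝ)..2 * π,
      (4 * cos t * (β₀ + β₂ * cos (2 * t) + γ * sin (2 * t)) + κ * cos t ^ 3)
        * (a * cos t + k * sin t)
      = 2 * π * (a * (3 * κ / 8 + 2 * β₀ + β₂) + k * γ) := by
  have hexpand (t : ℝ) :
      (4 * cos t * (β₀ + β₂ * cos (2 * t) + γ * sin (2 * t)) + κ * cos t ^ 3)
        * (a * cos t + k * sin t) =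
      4 * a * (β₀ - β₂) * cos t ^ 2 + a * (8 * β₂ + κ) * cos t ^ 4 +
        8 * k * γ * (sin t ^ 2 * cos t ^ 2) + 4 * k * (β₀ - β₂) * (sin t * cos t) +
        (k * (8 * β₂ + κ) + 8 * a * γ) * (sin t * cos t ^ 3) := by
    rw [cos_two_mul, sin_two_mul]
    ring
  have hcos4 : ∫ t in (0 : ℝ)..2 * π, cos t ^ 4 = 3 * π / 4 := by
    rw [integral_cos_pow, integral_cos_sq]
    simp only [cos_two_pi, sin_two_pi, cos_zero, sin_zero]
    push_cast
    ring
  have hsincos3 : ∫ t in (0 : ℝ)..2 * π, sin t * cos t ^ 3 = 0 := by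
    simpa using integral_sin_pow_odd_mul_cos_pow (a := 0) (b := 2 * π) 0 3
  simp only [hexpand]
  repeat rw [intervalIntegral.integral_add (Continuous.intervalIntegrable (by fun_prop) _ _)
    (Continuous.intervalIntegrable (by fun_prop) _ _)]
  simp only [intervalIntegral.integral_const_mul]
  rw [integral_cos_sq, hcos4, integral_sin_sq_mul_cos_sq, integral_sin_mul_cos₁, hsincos3]
  have hsin : sin (4 * (2 * π)) = 0 := by
    rw [show 4 * (2 * π) = (8 : ℕ) * π by push_cast; ring, sin_nat_mul_pi]
  simp only [cos_two_pi, sin_two_pi, cos_zero, sin_zero, hsin, mul_zero]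
  ring

end CriticalPlanarSystem

section AdaptiveSystem

variable {V V' : Type*} [NormedAddCommGroup V] [NormedSpace ℝ V] [NormedAddCommGroup V']
  [NormedSpace ℝ V']

/-- The action of an output `v` on the state `(s, a)` of an adaptive system: the activity `s` is
driven by `h • M v` and the adaptation variable `a` by `g • v`. -/
noncomputable def drive (h g : ℝ) (M : V →L[ℝ] V) : V →L[ℝ] V × V :=
  (h • M).prod (g • ContinuousLinearMap.id ℝ V)

/-- The decay rate `(s + a, α • a)` of the state `(s, a)` of an adaptive system. -/
noncomputable def decay (α : ℝ) : V × V →L[ℝ] V × V :=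
  (ContinuousLinearMap.fst ℝ V V + ContinuousLinearMap.snd ℝ V V).prod
    (α • ContinuousLinearMap.snd ℝ V V)

@[simp]
theorem drive_apply (h g : ℝ) (M : V →L[ℝ] V) (v : V) : drive h g M v = (h • M v, g • v) := rfl

@[simp]
theorem decay_apply (α : ℝ) (u : V × V) : decay α u = (u.1 + u.2, α • u.2) := rfl

/-- The vector field of the adaptive system `s' = h • M (Φ s) - s - a`, `a' = g • Φ s - α • a`. -/
noncomputable def adaptiveField (Φ : V → V) (M : V →L[ℝ] V) (g α h : ℝ) (u : V × V) : V × V :=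
  drive h g M (Φ u.1) - decay α u

/-- `W + cos 2t • U + sin 2t • Z` is the response of the adaptive system, linearized at the critical
parameter `h = 1 + α` and run at frequency `ω`, to the output perturbation `(1 + cos 2t) • b`. -/
structure IsQuadraticResponse (ω α : ℝ) (M : V →L[ℝ] V) (b : V) (W U Z : V × V) : Prop where
  mean : drive (1 + α) (ω ^ 2 + α ^ 2) M (W.1 + b) = decay α W
  cos : drive (1 + α) (ω ^ 2 + α ^ 2) M (U.1 + b) - decay α U = (2 * ω) • Z
  sin : drive (1 + α) (ω ^ 2 + α ^ 2) M Z.1 - decay α Z = -((2 * ω) • U)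

/-- The weight with which a quadratic response with components `w`, `u`, `z` along the quadratic
forcing contributes to the resonant part of the cubic forcing. -/
noncomputable def feedback (ω α w u z : ℝ) : ℝ :=
  (1 + α) * (w + u / 2) + (ω ^ 2 - α) / (2 * ω) * z

namespace IsQuadraticResponse

variable {ω α : ℝ} {M : V →L[ℝ] V}

theorem zero : IsQuadraticResponse ω α M 0 0 0 0 := by
  constructor <;> simp

theorem map {M' : V' →L[ℝ] V'} {b : V} {W U Z : V × V} (h : IsQuadraticResponse ω α M b W U Z)
    (L : V →L[ℝ] V') (hL : ∀ v, L (M v) = M' (L v)) :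
    IsQuadraticResponse ω α M' (L b) (L.prodMap L W) (L.prodMap L U) (L.prodMap L Z) := by
  have hdrive (v : V) : drive (1 + α) (ω ^ 2 + α ^ 2) M' (L v) =
      L.prodMap L (drive (1 + α) (ω ^ 2 + α ^ 2) M v) := by
    simp [hL]
  have hdecay (u : V × V) : decay α (L.prodMap L u) = L.prodMap L (decay α u) := by
    simp
  have hfst (u : V × V) : (L.prodMap L u).1 = L u.1 := rfl
  constructor
  · rw [hfst, ← map_add, hdrive, hdecay, h.mean]
  · rw [hfst, ← map_add, hdrive, hdecay, ← map_sub, h.cos, map_smul]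
  · rw [hfst, hdrive, hdecay, ← map_sub, h.sin, map_neg, map_smul]

theorem sum {ι : Type*} {s : Finset ι} {b : ι → V} {W U Z : ι → V × V}
    (h : ∀ i, IsQuadraticResponse ω α M (b i) (W i) (U i) (Z i)) :
    IsQuadraticResponse ω α M (∑ i ∈ s, b i) (∑ i ∈ s, W i) (∑ i ∈ s, U i) (∑ i ∈ s, Z i) := by
  constructor
  · simp only [Prod.fst_sum, ← Finset.sum_add_distrib, map_sum, (h _).mean]
  · simp only [Prod.fst_sum, ← Finset.sum_add_distrib, map_sum, ← Finset.sum_sub_distrib,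
      (h _).cos, Finset.smul_sum]
  · simp only [Prod.fst_sum, map_sum, ← Finset.sum_sub_distrib, (h _).sin, Finset.smul_sum,
      Finset.sum_neg_distrib]

end IsQuadraticResponse

theorem feedback_numerator_lt {α W z : ℝ} (hα : 0 < α) (hα1 : α < 1) (hz : 0 ≤ z)
    (hW : 1 + 2 * α ≤ W) :
    (1 + α) / 2 * ((α - 4 * W) * (α * z - 3 * W) + 4 * W * (1 + α) * z) -
        (W - α) * ((1 + α) * (α * z - 3 * W) - (α - 4 * W) * z) <
      (1 + α) * (3 / 2 - α / W) * ((α * z - 3 * W) ^ 2 + 4 * W * z ^ 2) := by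
  have hW0 : 0 < W := by linarith
  obtain ⟨ρ, hρ⟩ : ∃ ρ, ρ = α / W := ⟨_, rfl⟩
  have hρW : ρ * W = α := by rw [hρ, div_mul_cancel₀ _ hW0.ne']
  have hρ_le : ρ ≤ 1 / 3 := by rw [hρ, div_le_iff₀ hW0]; linarith
  rw [← hρ]
  have hquadratic : 0 < 14 / 3 * (1 + α) * z ^ 2 - 13 * α * z + 3 * (1 + α) * W := by
    nlinarith [sq_nonneg (z - 39 / 28 * α), mul_nonneg hα.le (sq_nonneg z),
      mul_le_mul_of_nonneg_left hW (by positivity : 0 ≤ 1 + α)]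
  have hcoeff₂ : 14 / 3 * (1 + α) * W ≤ (1 + α) * (3 / 2 - ρ) * (α ^ 2 + 4 * W) := by
    nlinarith [mul_nonneg (mul_nonneg (by positivity : 0 ≤ 1 + α) (sub_nonneg.2 hρ_le))
      (by positivity : 0 ≤ α ^ 2 + 4 * W), mul_nonneg hα.le (sq_nonneg α)]
  have hcoeff₁ : -(13 * α * W) ≤ 4 * W ^ 2 - W * (2 + 15 * α + 8 * α ^ 2) +
      α ^ 2 * (11 + 9 * α) / 2 := by
    nlinarith [mul_nonneg hW0.le (sub_nonneg.2 hW), mul_nonneg hα.le (sub_nonneg.2 hα1.le),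
      mul_nonneg hW0.le (mul_nonneg hα.le (sub_nonneg.2 hα1.le)), pow_pos hα 3]
  have hcoeff₀ : 3 * (1 + α) * W ^ 2 ≤ 9 / 2 * (1 + α) * W * (W - α) := by
    nlinarith [mul_nonneg (mul_nonneg (by positivity : 0 ≤ 1 + α) hW0.le)
      (by linarith : 0 ≤ W - 3 * α)]
  rw [← sub_pos]
  calc
    0 < W * (14 / 3 * (1 + α) * z ^ 2 - 13 * α * z + 3 * (1 + α) * W) := mul_pos hW0 hquadratic
    _ = 14 / 3 * (1 + α) * W * z ^ 2 + -(13 * α * W) * z + 3 * (1 + α) * W ^ 2 := by ring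
    _ ≤ (1 + α) * (3 / 2 - ρ) * (α ^ 2 + 4 * W) * z ^ 2 +
        (4 * W ^ 2 - W * (2 + 15 * α + 8 * α ^ 2) + α ^ 2 * (11 + 9 * α) / 2) * z +
        9 / 2 * (1 + α) * W * (W - α) := by gcongr
    _ = _ := by linear_combination (1 + α) * (9 * W - 6 * α * z) * hρW

-- With `z = (1 + α) * (1 - x)`, the transfer function from the forcing to the output is
-- `(σ + 1) * (σ + α) / (σ ^ 2 + z * σ + q)`; the three components below come from its values at
-- `σ = 0` and `σ = 2 * ω * i`, the denominator at the latter being `k + 2 * ω * z * i`.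
theorem isQuadraticResponse_smul_id {ω α z q k D : ℝ} (hq : q = ω ^ 2 + α * z)
    (hk : k = α * z - 3 * ω ^ 2) (hD : D = k ^ 2 + 4 * ω ^ 2 * z ^ 2) (hq0 : q ≠ 0) (hD0 : D ≠ 0)
    {x : ℝ} (hz : z = (1 + α) * (1 - x)) :
    IsQuadraticResponse ω α (x • ContinuousLinearMap.id ℝ ℝ) 1
      (α / q - 1, (ω ^ 2 + α ^ 2) / q)
      (((α - 4 * ω ^ 2) * k + 4 * ω ^ 2 * (1 + α) * z) / D - 1,
        (ω ^ 2 + α ^ 2) * (k + 4 * ω ^ 2 * z) / D)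
      (-(2 * ω * ((1 + α) * k - (α - 4 * ω ^ 2) * z)) / D,
        -(2 * ω * (ω ^ 2 + α ^ 2) * (k - z)) / D) := by
  have hdrive (g y : ℝ) : drive (1 + α) g (x • ContinuousLinearMap.id ℝ ℝ) y =
      ((1 + α - z) * y, g * y) := by
    ext
    · simp only [drive_apply, _root_.smul_apply, ContinuousLinearMap.id_apply, smul_eq_mul, hz]
      ring
    · rfl
  constructor
  · simp only [hdrive, decay_apply, sub_add_cancel, smul_eq_mul, Prod.mk.injEq]
    constructor <;> field_simp
    rw [hq]
    ring
  · simp only [hdrive, decay_apply, sub_add_cancel, smul_eq_mul, Prod.mk_sub_mk, Prod.smul_mk,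
      Prod.mk.injEq]
    constructor <;> field_simp <;> (simp only [hD, hk]; ring)
  · simp only [hdrive, decay_apply, smul_eq_mul, Prod.mk_sub_mk, Prod.smul_mk, Prod.neg_mk,
      Prod.mk.injEq]
    constructor <;> field_simp <;> (simp only [hD, hk]; ring)

theorem exists_isQuadraticResponse_smul_id {ω α x : ℝ} (hω : 0 < ω) (hα : 0 < α) (hα1 : α < 1)
    (hx : x ≤ 1) (hωα : 1 + 2 * α ≤ ω ^ 2) :
    ∃ W U Z : ℝ × ℝ, IsQuadraticResponse ω α (x • ContinuousLinearMap.id ℝ ℝ) 1 W U Z ∧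
      feedback ω α W.1 U.1 Z.1 < 0 := by
  obtain ⟨z, hz⟩ : ∃ z, z = (1 + α) * (1 - x) := ⟨_, rfl⟩
  obtain ⟨q, hq⟩ : ∃ q, q = ω ^ 2 + α * z := ⟨_, rfl⟩
  obtain ⟨k, hk⟩ : ∃ k, k = α * z - 3 * ω ^ 2 := ⟨_, rfl⟩
  obtain ⟨D, hD⟩ : ∃ D, D = k ^ 2 + 4 * ω ^ 2 * z ^ 2 := ⟨_, rfl⟩
  have hz0 : 0 ≤ z := hz ▸ mul_nonneg (by positivity) (sub_nonneg.2 hx)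
  have hq0 : 0 < q := by rw [hq]; positivity
  have hD0 : 0 < D := by
    rcases hz0.eq_or_lt with rfl | hz0
    · rw [hD, hk, mul_zero, zero_sub, neg_sq]
      positivity
    · rw [hD]
      positivity
  refine ⟨_, _, _, isQuadraticResponse_smul_id hq hk hD hq0.ne' hD0.ne' hz, ?_⟩
  have hαq : α / q ≤ α / ω ^ 2 := by
    gcongr
    rw [hq]
    exact le_add_of_nonneg_right (mul_nonneg hα.le hz0)
  have hpoly := feedback_numerator_lt hα hα1 hz0 hωα
  rw [← hk, ← hD, ← div_lt_iff₀ hD0] at hpoly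
  calc
    _ = ((1 + α) / 2 * ((α - 4 * ω ^ 2) * k + 4 * ω ^ 2 * (1 + α) * z) -
          (ω ^ 2 - α) * ((1 + α) * k - (α - 4 * ω ^ 2) * z)) / D - (1 + α) * (3 / 2 - α / q) := by
      rw [feedback]
      field_simp
      ring
    _ < (1 + α) * (3 / 2 - α / ω ^ 2) - (1 + α) * (3 / 2 - α / q) := by gcongr
    _ ≤ 0 := by nlinarith

variable {I K : Type*} [Fintype I] [Fintype K]

/-- The symmetric operator `M` is diagonalized by the Parseval frame `e`, with eigenvalues `x`
at most `1`, and the eigenvalue `1` is simple, with unit eigenvector `p`. -/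
structure IsCriticalMode (M : (I → ℝ) →L[ℝ] (I → ℝ)) (e : K → I → ℝ) (x : K → ℝ) (p : I → ℝ) :
    Prop where
  sum_dotProduct_smul : ∀ v, ∑ k, (e k ⬝ᵥ v) • e k = v
  map_frame : ∀ k, M (e k) = x k • e k
  eigenvalue_le_one : ∀ k, x k ≤ 1
  map_mode : M p = p
  dotProduct_mode_self : p ⬝ᵥ p = 1
  eigenvalue_lt_one_or : ∀ k, x k < 1 ∨ ∃ c : ℝ, e k = c • p

namespace IsCriticalMode

variable {M : (I → ℝ) →L[ℝ] (I → ℝ)} {e : K → I → ℝ} {x : K → ℝ} {p : I → ℝ}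

theorem eq_zero_of_forall_dotProduct_eq_zero (h : IsCriticalMode M e x p) {v : I → ℝ}
    (hv : ∀ k, e k ⬝ᵥ v = 0) : v = 0 := by
  rw [← h.sum_dotProduct_smul v]
  exact Finset.sum_eq_zero fun k _ => by rw [hv k, zero_smul]

theorem dotProduct_map (h : IsCriticalMode M e x p) (v w : I → ℝ) :
    v ⬝ᵥ M w = ∑ k, x k * (e k ⬝ᵥ v) * (e k ⬝ᵥ w) := by
  conv_lhs => rw [← h.sum_dotProduct_smul w]
  simp only [map_sum, map_smul, h.map_frame, dotProduct_sum, dotProduct_smul, smul_eq_mul]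
  refine Finset.sum_congr rfl fun k _ => ?_
  rw [dotProduct_comm v]
  ring

theorem dotProduct_map_comm (h : IsCriticalMode M e x p) (v w : I → ℝ) :
    v ⬝ᵥ M w = M v ⬝ᵥ w := by
  rw [dotProduct_comm (M v), h.dotProduct_map, h.dotProduct_map]
  simp only [mul_right_comm]

theorem dotProduct_frame_map (h : IsCriticalMode M e x p) (k : K) (v : I → ℝ) :
    e k ⬝ᵥ M v = x k * (e k ⬝ᵥ v) := by
  rw [h.dotProduct_map_comm, h.map_frame, smul_dotProduct, smul_eq_mul]

theorem dotProduct_mode_map (h : IsCriticalMode M e x p) (v : I → ℝ) : p ⬝ᵥ M v = p ⬝ᵥ v := by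
  rw [h.dotProduct_map_comm, h.map_mode]

theorem exists_isQuadraticResponse (h : IsCriticalMode M e x p) {ω α : ℝ} (hω : 0 < ω)
    (hα : 0 < α) (hα1 : α < 1) (hωα : 1 + 2 * α ≤ ω ^ 2) {b : I → ℝ} (hb : b ≠ 0) :
    ∃ W U Z : (I → ℝ) × (I → ℝ), IsQuadraticResponse ω α M b W U Z ∧
      feedback ω α (b ⬝ᵥ W.1) (b ⬝ᵥ U.1) (b ⬝ᵥ Z.1) < 0 := by
  choose W U Z hresponse hneg using
    fun k => exists_isQuadraticResponse_smul_id hω hα hα1 (h.eigenvalue_le_one k) hωα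
  set L : K → ℝ →L[ℝ] (I → ℝ) :=
    fun k => ContinuousLinearMap.toSpanSingleton ℝ ((e k ⬝ᵥ b) • e k) with hL
  have hmap (k : K) (c : ℝ) : L k ((x k • ContinuousLinearMap.id ℝ ℝ) c) = M (L k c) := by
    simp only [hL, ContinuousLinearMap.toSpanSingleton_apply, map_smul, h.map_frame,
      _root_.smul_apply, ContinuousLinearMap.id_apply, smul_smul, smul_eq_mul]
    ring_nf
  have hdot (c : K → ℝ × ℝ) : b ⬝ᵥ (∑ k, (L k).prodMap (L k) (c k)).1 =
      ∑ k, (c k).1 * (e k ⬝ᵥ b) ^ 2 := by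
    simp only [Prod.fst_sum, dotProduct_sum, ContinuousLinearMap.coe_prodMap', Prod.map_fst, hL,
      ContinuousLinearMap.toSpanSingleton_apply, dotProduct_smul, dotProduct_comm b (e _),
      smul_eq_mul, ← sq]
  have hforcing : ∑ k, L k 1 = b := by
    simpa only [hL, ContinuousLinearMap.toSpanSingleton_apply, one_smul]
      using h.sum_dotProduct_smul b
  obtain ⟨k₀, hk₀⟩ : ∃ k, e k ⬝ᵥ b ≠ 0 := by
    by_contra! hcon
    exact hb (h.eq_zero_of_forall_dotProduct_eq_zero hcon)
  have hsum := IsQuadraticResponse.sum (s := Finset.univ)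
    fun k => (hresponse k).map (L k) (hmap k)
  rw [hforcing] at hsum
  refine ⟨_, _, _, hsum, ?_⟩
  calc
    _ = ∑ k, feedback ω α (W k).1 (U k).1 (Z k).1 * (e k ⬝ᵥ b) ^ 2 := by
      rw [hdot, hdot, hdot, feedback, Finset.sum_div, ← Finset.sum_add_distrib, Finset.mul_sum,
        Finset.mul_sum, ← Finset.sum_add_distrib]
      refine Finset.sum_congr rfl fun k _ => ?_
      rw [feedback]
      ring
    _ < 0 := Finset.sum_neg' (fun k _ => mul_nonpos_of_nonpos_of_nonneg (hneg k).le (sq_nonneg _))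
      ⟨k₀, Finset.mem_univ _, mul_neg_of_neg_of_pos (hneg k₀) (by positivity)⟩

end IsCriticalMode

end AdaptiveSystem

section Branch

open scoped Topology

variable {Y : Type*} [NormedAddCommGroup Y] [NormedSpace ℝ Y]

/-- The linearization `L` of a periodic problem `ω • u' = L u`, bordered by a correction `c u` of
the frequency and a correction `d u` of the parameter in the directions `D` and `E`. The solution
operator `S` of `u' + u = V` makes it an operator on the unknown `V`. -/
noncomputable def borderedLinearization (ω : ℝ) (L S : Y →L[ℝ] Y) (c d : Y →L[ℝ] ℝ) (D E : Y) :
    Y →L[ℝ] Y :=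
  ω • (1 : Y →L[ℝ] Y) - (ω • (1 : Y →L[ℝ] Y) + L + d.smulRight E - c.smulRight D) ∘L S

theorem borderedLinearization_apply (ω : ℝ) (L S : Y →L[ℝ] Y) (c d : Y →L[ℝ] ℝ) (D E V : Y) :
    borderedLinearization ω L S c d D E V =
      ω • (V - S V) + c (S V) • D - L (S V) - d (S V) • E := by
  change ω • V - (ω • S V + L (S V) + d (S V) • E - c (S V) • D) = _
  module

variable [CompleteSpace Y]

theorem isInvertible_smul_one_sub_of_isCompactOperator {C : Y →L[ℝ] Y} (hC : IsCompactOperator C)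
    {ω : ℝ} (hω : ω ≠ 0) (hinj : ∀ v, ω • v = C v → v = 0) :
    (ω • (1 : Y →L[ℝ] Y) - C).IsInvertible := by
  rcases hC.hasEigenvalue_or_mem_resolventSet hω with h | h
  · obtain ⟨v, hv⟩ := h.exists_hasEigenvector
    exact absurd (hinj v hv.apply_eq_smul.symm) hv.2
  · rw [spectrum.mem_resolventSet_iff, Algebra.algebraMap_eq_smul_one] at h
    obtain ⟨u, hu⟩ := h
    exact ⟨ContinuousLinearEquiv.unitsEquiv ℝ Y u, hu⟩

theorem isInvertible_borderedLinearization {ω : ℝ} (hω : ω ≠ 0) (L : Y →L[ℝ] Y) {S : Y →L[ℝ] Y}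
    (hS : IsCompactOperator S) {c d : Y →L[ℝ] ℝ} {D E : Y}
    (hinj : ∀ V, borderedLinearization ω L S c d D E V = 0 → V = 0) :
    (borderedLinearization ω L S c d D E).IsInvertible :=
  isInvertible_smul_one_sub_of_isCompactOperator (hS.clm_comp (ω • (1 : Y →L[ℝ] Y) + L + _ - _)) hω
    fun V hV => hinj V (sub_eq_zero.2 hV)

theorem exists_zero_branch {Ψ : ℝ × Y → Y} {T : Y →L[ℝ] Y} (hT : T.IsInvertible) {f : Y}
    (hΨ0 : ∀ v, Ψ (0, v) = T v - f) (hΨ : ∀ v, ContDiffAt ℝ 1 Ψ (0, v)) :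
    ∃ ψ : ℝ → Y, T (ψ 0) = f ∧ ContDiffAt ℝ 1 ψ 0 ∧ ∀ᶠ r in 𝓝 0, Ψ (r, ψ r) = 0 := by
  obtain ⟨v, hTv⟩ : ∃ v, T v = f := hT.bijective.surjective f
  have hpartial : fderiv ℝ Ψ (0, v) ∘L .inr ℝ ℝ Y = T := by
    have hcomp : HasFDerivAt (fun w : Y => Ψ (0, w)) (fderiv ℝ Ψ (0, v) ∘L .inr ℝ ℝ Y) v :=
      HasFDerivAt.comp (f := fun w : Y => ((0 : ℝ), w)) v
        ((hΨ v).differentiableAt one_ne_zero).hasFDerivAt (hasFDerivAt_prodMk_right 0 v)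
    refine hcomp.unique ?_
    simp only [hΨ0]
    exact T.hasFDerivAt.sub_const f
  have hinv : (fderiv ℝ Ψ (0, v) ∘L .inr ℝ ℝ Y).IsInvertible := hpartial ▸ hT
  refine ⟨(hΨ v).implicitFunction one_ne_zero hinv, ?_,
    (hΨ v).contDiffAt_implicitFunction one_ne_zero hinv, ?_⟩
  · rw [(hΨ v).implicitFunction_apply_self one_ne_zero hinv, hTv]
  · simpa [hΨ0, hTv] using (hΨ v).eventually_apply_implicitFunction one_ne_zero hinv

variable {X : Type*} [NormedCommRing X] [NormedAlgebra ℝ X]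

/-- The nonlinearity `r⁻¹ • Φ (r • s)`, where `Φ` has the linear part `s` and the quadratic part
`P ((P s) ^ 2) / 2` at the origin, and where `r ^ 2 • Θ (r, s)` collects the higher order terms. -/
noncomputable def rescaledNonlinearity (P : X →L[ℝ] X) (Θ : ℝ × X → X) (r : ℝ) (s : X) : X :=
  s + (r / 2) • P (P s ^ 2) + r ^ 2 • Θ (r, s)

/-- The coefficient of `r ^ 2` in `rescaledNonlinearity P Θ r (s₀ + r • s₁ + r ^ 2 • u)`, apart from
`u` itself. -/
noncomputable def secondOrderPart (P : X →L[ℝ] X) (Θ : ℝ × X → X) (s₀ s₁ : X) (r : ℝ) (u : X) :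
    X :=
  P (P s₀ * P (s₁ + r • u) + (r / 2) • P (s₁ + r • u) ^ 2) + Θ (r, s₀ + r • s₁ + r ^ 2 • u)

theorem rescaledNonlinearity_expansion (P : X →L[ℝ] X) (Θ : ℝ × X → X) (s₀ s₁ : X) (r : ℝ)
    (u : X) :
    rescaledNonlinearity P Θ r (s₀ + r • s₁ + r ^ 2 • u) =
      s₀ + r • (s₁ + (1 / 2 : ℝ) • P (P s₀ ^ 2)) +
        r ^ 2 • (u + secondOrderPart P Θ s₀ s₁ r u) := by
  have hP : P (s₀ + r • s₁ + r ^ 2 • u) = P s₀ + r • P (s₁ + r • u) := by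
    simp only [map_add, map_smul]
    module
  have hsq (y z : X) : (y + r • z) ^ 2 = y ^ 2 + (2 * r) • (y * z + (r / 2) • z ^ 2) := by
    simp only [sq, add_mul, mul_add, smul_mul_assoc, mul_smul_comm, mul_comm z y]
    module
  rw [rescaledNonlinearity, secondOrderPart, hP, hsq, map_add P (P s₀ ^ 2), map_smul P (2 * r)]
  module

theorem contDiffAt_secondOrderPart (P : X →L[ℝ] X) {Θ : ℝ × X → X} {s₀ : X}
    (hΘ : ContDiffAt ℝ 1 Θ (0, s₀)) (s₁ u : X) :
    ContDiffAt ℝ 1 (fun y : ℝ × X => secondOrderPart P Θ s₀ s₁ y.1 y.2) (0, u) := by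
  have hinner : ContDiffAt ℝ 1 (fun y : ℝ × X => (y.1, s₀ + y.1 • s₁ + y.1 ^ 2 • y.2)) (0, u) := by
    fun_prop
  have hΘ' : ContDiffAt ℝ 1 (fun y : ℝ × X => Θ (y.1, s₀ + y.1 • s₁ + y.1 ^ 2 • y.2)) (0, u) :=
    ContDiffAt.comp (g := Θ) (0, u) (by simpa using hΘ) hinner
  unfold secondOrderPart
  exact ContDiffAt.add (by fun_prop) hΘ'

theorem exists_branch_of_expansion {ω : ℝ} {σ : Y →L[ℝ] X} {K J : X →L[ℝ] Y} {A S : Y →L[ℝ] Y}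
    {c d : Y →L[ℝ] ℝ} (P : X →L[ℝ] X) {Θ : ℝ × X → X} {U₀ U₁ D₀ D₁ : Y}
    (hΘ : ContDiffAt ℝ 1 Θ (0, σ U₀)) (h₀ : ω • D₀ = K (σ U₀) - A U₀)
    (h₁ : ω • D₁ = K (σ U₁ + (1 / 2 : ℝ) • P (P (σ U₀) ^ 2)) - A U₁)
    (hT : (borderedLinearization ω (K ∘L σ - A) S c d D₀ (J (σ U₀))).IsInvertible) :
    ∃ V : ℝ → Y,
      borderedLinearization ω (K ∘L σ - A) S c d D₀ (J (σ U₀)) (V 0) =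
        K (P (P (σ U₀) * P (σ U₁)) + Θ (0, σ U₀)) ∧
      ContDiffAt ℝ 1 V 0 ∧ ∀ᶠ r in 𝓝 0,
        (ω + r ^ 2 * c (S (V r))) • (D₀ + r • D₁ + r ^ 2 • (V r - S (V r))) =
          (K + (r ^ 2 * d (S (V r))) • J)
            (rescaledNonlinearity P Θ r (σ (U₀ + r • U₁ + r ^ 2 • S (V r)))) -
          A (U₀ + r • U₁ + r ^ 2 • S (V r)) := by
  set B : X := (1 / 2 : ℝ) • P (P (σ U₀) ^ 2)
  let q : ℝ × Y → X := fun y => secondOrderPart P Θ (σ U₀) (σ U₁) y.1 (σ (S y.2))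
  let Ψ : ℝ × Y → Y := fun y =>
    ω • (y.2 - S y.2) + c (S y.2) • (D₀ + y.1 • D₁ + y.1 ^ 2 • (y.2 - S y.2)) -
      K (σ (S y.2) + q y) -
      d (S y.2) • J (σ U₀ + y.1 • (σ U₁ + B) + y.1 ^ 2 • (σ (S y.2) + q y)) + A (S y.2)
  have hΨ0 (V : Y) : Ψ (0, V) = borderedLinearization ω (K ∘L σ - A) S c d D₀ (J (σ U₀)) V -
      K (P (P (σ U₀) * P (σ U₁)) + Θ (0, σ U₀)) := by
    have hq0 : q (0, V) = P (P (σ U₀) * P (σ U₁)) + Θ (0, σ U₀) := by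
      simp [q, secondOrderPart]
    rw [borderedLinearization_apply, ← hq0]
    simp only [Ψ, map_add, _root_.sub_apply, ContinuousLinearMap.comp_apply, map_smul]
    module
  have hΨ (V : Y) : ContDiffAt ℝ 1 Ψ (0, V) := by
    have hq : ContDiffAt ℝ 1 q (0, V) :=
      (contDiffAt_secondOrderPart P hΘ (σ U₁) (σ (S V))).comp (g := fun y : ℝ × X =>
        secondOrderPart P Θ (σ U₀) (σ U₁) y.1 y.2) (f := fun y : ℝ × Y => (y.1, σ (S y.2)))
        (0, V) (by fun_prop)
    fun_prop
  obtain ⟨V, hV0, hVd, hV⟩ := exists_zero_branch hT hΨ0 hΨ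
  refine ⟨V, hV0, hVd, hV.mono fun r hr => ?_⟩
  have hexp : rescaledNonlinearity P Θ r (σ (U₀ + r • U₁ + r ^ 2 • S (V r))) =
      σ U₀ + r • (σ U₁ + B) + r ^ 2 • (σ (S (V r)) + q (r, V r)) := by
    rw [map_add, map_add, map_smul, map_smul, rescaledNonlinearity_expansion]
  rw [hexp]
  simp only [Ψ, map_add, map_smul, _root_.add_apply, _root_.smul_apply] at h₁ hr ⊢
  linear_combination (norm := module) h₀ + r • h₁ + r ^ 2 • hr

end Branch

section PeriodicProblem

open Real
open scoped Topology

variable {F G : Type*} [NormedAddCommGroup F] [NormedSpace ℝ F] [NormedAddCommGroup G]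
  [NormedSpace ℝ G]

/-- Pointwise application of a linear map to functions on the circle. -/
noncomputable def postcomp (M : F →L[ℝ] G) : C(Circ, F) →L[ℝ] C(Circ, G) :=
  M.compLeftContinuous ℝ Circ

@[simp]
theorem postcomp_apply (M : F →L[ℝ] G) (v : C(Circ, F)) (θ : Circ) : postcomp M v θ = M (v θ) := rfl

theorem periodic_comp_circ {β : Type*} (f : Circ → β) :
    Function.Periodic (fun t : ℝ => f t) (2 * π) := fun t =>
  congrArg f (AddCircle.coe_add_period _ t)

variable {I : Type*} [Fintype I]

/-- The functional `v ↦ e ⬝ᵥ v`. -/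
noncomputable def dotProductCLM (e : I → ℝ) : (I → ℝ) →L[ℝ] ℝ :=
  ∑ i, e i • ContinuousLinearMap.proj (R := ℝ) (φ := fun _ : I => ℝ) i

@[simp]
theorem dotProductCLM_apply (e v : I → ℝ) : dotProductCLM e v = e ⬝ᵥ v := by
  simp [dotProductCLM, dotProduct]

/-- The cycle `(cos t • p, (α cos t + ω sin t) • p)` of the linearization of the adaptive system at
the critical parameter. -/
noncomputable def criticalOrbit (ω α : ℝ) (p : I → ℝ) : C(Circ, (I → ℝ) × (I → ℝ)) :=
  harmonic1 (p, α • p) (0, ω • p)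

/-- The velocity of `criticalOrbit ω α p`. -/
noncomputable def criticalVelocity (ω α : ℝ) (p : I → ℝ) : C(Circ, (I → ℝ) × (I → ℝ)) :=
  harmonic1 (0, ω • p) (-(p, α • p))

/-- The component along `p` of the activity at time `0`. -/
noncomputable def activityAtZero (p : I → ℝ) : C(Circ, (I → ℝ) × (I → ℝ)) →L[ℝ] ℝ :=
  dotProductCLM p ∘L ContinuousLinearMap.fst ℝ (I → ℝ) (I → ℝ) ∘L ContinuousMap.evalCLM ℝ (0 : Circ)

/-- The component along `p` of the adaptation at time `0`. -/
noncomputable def adaptationAtZero (p : I → ℝ) : C(Circ, (I → ℝ) × (I → ℝ)) →L[ℝ] ℝ :=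
  dotProductCLM p ∘L ContinuousLinearMap.snd ℝ (I → ℝ) (I → ℝ) ∘L ContinuousMap.evalCLM ℝ (0 : Circ)

/-- The blow-up at the critical orbit of the periodic problem for the adaptive system. The
corrections of the frequency and of the parameter are read off from the perturbation at time `0`,
which makes the problem uniquely solvable. -/
noncomputable def adaptiveLinearization (ω α : ℝ) (M : (I → ℝ) →L[ℝ] (I → ℝ)) (p : I → ℝ) :
    C(Circ, (I → ℝ) × (I → ℝ)) →L[ℝ] C(Circ, (I → ℝ) × (I → ℝ)) :=
  borderedLinearization ω
    (postcomp (drive (1 + α) (ω ^ 2 + α ^ 2) M) ∘L postcomp (ContinuousLinearMap.fst ℝ _ _) -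
      postcomp (decay α))
    (circleResolvent (2 * π) ((I → ℝ) × (I → ℝ))) (activityAtZero p) (adaptationAtZero p)
    (criticalVelocity ω α p)
    (postcomp (drive 1 0 M) (postcomp (ContinuousLinearMap.fst ℝ _ _) (criticalOrbit ω α p)))

variable {K : Type*} [Fintype K] {M : (I → ℝ) →L[ℝ] (I → ℝ)} {e : K → I → ℝ} {x : K → ℝ}
  {p : I → ℝ} {ω α : ℝ} {V : C(Circ, (I → ℝ) × (I → ℝ))} {Q : C(Circ, I → ℝ)}

theorem hasDerivAt_of_adaptiveLinearization (hω : ω ≠ 0) (hMp : M p = p)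
    (hV : adaptiveLinearization ω α M p V = postcomp (drive (1 + α) (ω ^ 2 + α ^ 2) M) Q)
    {u : C(Circ, (I → ℝ) × (I → ℝ))} (hu : circleResolvent (2 * π) _ V = u) (t : ℝ) :
    HasDerivAt (fun t : ℝ => u t)
      (ω⁻¹ • (drive (1 + α) (ω ^ 2 + α ^ 2) M ((u t).1 + Q t) - decay α (u t) +
        (adaptationAtZero p u * cos t) • (p, 0) - activityAtZero p u • criticalVelocity ω α p t))
      t := by
  have hdrive : drive 1 0 M (criticalOrbit ω α p t).1 = cos t • (p, 0) := by
    simp [criticalOrbit, hMp]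
  have hVt : ω • (V t - u t) + activityAtZero p u • criticalVelocity ω α p t -
      (drive (1 + α) (ω ^ 2 + α ^ 2) M (u t).1 - decay α (u t)) -
        adaptationAtZero p u • cos t • (p, 0) = drive (1 + α) (ω ^ 2 + α ^ 2) M (Q t) := by
    rw [← hdrive, ← hu]
    rw [adaptiveLinearization, borderedLinearization_apply] at hV
    exact DFunLike.congr_fun hV (t : Circ)
  refine (hu ▸ hasDerivAt_circleResolvent V t).congr_deriv ?_
  rw [eq_inv_smul_iff₀ hω, map_add, ← hVt]
  module

theorem hasDerivAt_dotProduct_of_adaptiveLinearization (hω : ω ≠ 0) (hMp : M p = p)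
    (hV : adaptiveLinearization ω α M p V = postcomp (drive (1 + α) (ω ^ 2 + α ^ 2) M) Q)
    {u : C(Circ, (I → ℝ) × (I → ℝ))} (hu : circleResolvent (2 * π) _ V = u) {q : I → ℝ} {y : ℝ}
    (hq : ∀ v, q ⬝ᵥ M v = y * (q ⬝ᵥ v)) (t : ℝ) :
    HasDerivAt (fun t : ℝ => q ⬝ᵥ (u t).1) (ω⁻¹ * (((1 + α) * y - 1) * (q ⬝ᵥ (u t).1) -
      q ⬝ᵥ (u t).2 + ((adaptationAtZero p u * cos t + activityAtZero p u * sin t) * (q ⬝ᵥ p) +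
        (1 + α) * y * (q ⬝ᵥ Q t)))) t ∧
    HasDerivAt (fun t : ℝ => q ⬝ᵥ (u t).2) (ω⁻¹ * ((ω ^ 2 + α ^ 2) * (q ⬝ᵥ (u t).1) -
      α * (q ⬝ᵥ (u t).2) + (-(activityAtZero p u * (ω * cos t - α * sin t)) * (q ⬝ᵥ p) +
        (ω ^ 2 + α ^ 2) * (q ⬝ᵥ Q t)))) t := by
  have hderiv := hasDerivAt_of_adaptiveLinearization hω hMp hV hu t
  have hfst := (dotProductCLM q ∘L .fst ℝ _ _).hasFDerivAt.comp_hasDerivAt t hderiv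
  have hsnd := (dotProductCLM q ∘L .snd ℝ _ _).hasFDerivAt.comp_hasDerivAt t hderiv
  simp only [Function.comp_def, ContinuousLinearMap.comp_apply, ContinuousLinearMap.coe_fst',
    ContinuousLinearMap.coe_snd', dotProductCLM_apply] at hfst hsnd
  refine ⟨hfst.congr_deriv ?_, hsnd.congr_deriv ?_⟩
  · simp only [criticalVelocity, harmonic1_coe, drive_apply, decay_apply, Prod.smul_fst,
      Prod.fst_add, Prod.fst_sub, Prod.fst_neg, dotProduct_smul, dotProduct_add, dotProduct_sub,
      dotProduct_neg, dotProduct_zero, hq, smul_eq_mul]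
    ring
  · simp only [criticalVelocity, harmonic1_coe, drive_apply, decay_apply, Prod.smul_snd,
      Prod.snd_add, Prod.snd_sub, Prod.snd_neg, dotProduct_smul, dotProduct_add, dotProduct_sub,
      dotProduct_neg, dotProduct_zero, smul_eq_mul]
    ring

namespace IsCriticalMode

variable {u : C(Circ, (I → ℝ) × (I → ℝ))}

theorem adaptationAtZero_mul_add_integral_eq_zero (h : IsCriticalMode M e x p) (hω : ω ≠ 0)
    (hV : adaptiveLinearization ω α M p V = postcomp (drive (1 + α) (ω ^ 2 + α ^ 2) M) Q)
    (hu : circleResolvent (2 * π) _ V = u) :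
    adaptationAtZero p u * (π * ω) + ∫ t in (0 : ℝ)..2 * π,
      (p ⬝ᵥ Q t) * ((1 + α) * ω * cos t + (ω ^ 2 - α) * sin t) = 0 := by
  have hode := hasDerivAt_dotProduct_of_adaptiveLinearization hω h.map_mode hV hu (q := p) (y := 1)
    fun v => by rw [h.dotProduct_mode_map, one_mul]
  have hν : Continuous fun t : ℝ => p ⬝ᵥ Q t := by
    simp only [← dotProductCLM_apply]
    exact (dotProductCLM p).continuous.comp (continuous_comp_addCircle_coe Q)
  refine detuning_mul_add_integral_eq_zero (c := activityAtZero p u) hω hν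
    (fun t => (hode t).1.congr_deriv ?_) (fun t => (hode t).2.congr_deriv ?_)
    (periodic_comp_circ (fun θ => p ⬝ᵥ (u θ).1)).eq (periodic_comp_circ (fun θ => p ⬝ᵥ (u θ).2)).eq
  · rw [h.dotProduct_mode_self]
    ring
  · rw [h.dotProduct_mode_self]
    ring

theorem corrections_eq_zero (h : IsCriticalMode M e x p) (hω : ω ≠ 0)
    (hV : adaptiveLinearization ω α M p V = 0) (hu : circleResolvent (2 * π) _ V = u) :
    adaptationAtZero p u = 0 ∧ activityAtZero p u = 0 := by
  rw [← map_zero (postcomp (drive (1 + α) (ω ^ 2 + α ^ 2) M))] at hV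
  have hd : adaptationAtZero p u = 0 := by
    have h := h.adaptationAtZero_mul_add_integral_eq_zero hω hV hu
    simpa [pi_ne_zero, hω] using h
  have hode := hasDerivAt_dotProduct_of_adaptiveLinearization hω h.map_mode hV hu (q := p) (y := 1)
    fun v => by rw [h.dotProduct_mode_map, one_mul]
  refine ⟨hd, frequencyShift_eq_zero (α := α) hω (fun t => (hode t).1.congr_deriv ?_)
    (fun t => (hode t).2.congr_deriv ?_)
    (periodic_comp_circ (fun θ => p ⬝ᵥ (u θ).1)).eq (periodic_comp_circ (fun θ => p ⬝ᵥ (u θ).2)).eq⟩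
  · rw [hd, h.dotProduct_mode_self, ContinuousMap.zero_apply, dotProduct_zero]
    ring
  · rw [h.dotProduct_mode_self, ContinuousMap.zero_apply, dotProduct_zero]
    ring

theorem hasDerivAt_components_of_kernel (h : IsCriticalMode M e x p) (hω : ω ≠ 0)
    (hV : adaptiveLinearization ω α M p V = 0) (hu : circleResolvent (2 * π) _ V = u) {q : I → ℝ}
    {y : ℝ} (hq : ∀ v, q ⬝ᵥ M v = y * (q ⬝ᵥ v)) (t : ℝ) :
    HasDerivAt (fun t : ℝ => q ⬝ᵥ (u t).1)
      (ω⁻¹ * ((1 + α) * y - 1) * (q ⬝ᵥ (u t).1) + -ω⁻¹ * (q ⬝ᵥ (u t).2)) t ∧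
    HasDerivAt (fun t : ℝ => q ⬝ᵥ (u t).2)
      (ω⁻¹ * (ω ^ 2 + α ^ 2) * (q ⬝ᵥ (u t).1) + -(ω⁻¹ * α) * (q ⬝ᵥ (u t).2)) t := by
  obtain ⟨hd, hc⟩ := h.corrections_eq_zero hω hV hu
  rw [← map_zero (postcomp (drive (1 + α) (ω ^ 2 + α ^ 2) M))] at hV
  obtain ⟨hξ, hη⟩ := hasDerivAt_dotProduct_of_adaptiveLinearization hω h.map_mode hV hu hq t
  rw [hc, ContinuousMap.zero_apply, dotProduct_zero] at hξ hη
  rw [hd] at hξ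
  exact ⟨hξ.congr_deriv (by ring), hη.congr_deriv (by ring)⟩

theorem mode_components_eq_zero_of_kernel (h : IsCriticalMode M e x p) (hω : ω ≠ 0)
    (hV : adaptiveLinearization ω α M p V = 0) (hu : circleResolvent (2 * π) _ V = u) (t : ℝ) :
    p ⬝ᵥ (u t).1 = 0 ∧ p ⬝ᵥ (u t).2 = 0 := by
  have hode := h.hasDerivAt_components_of_kernel hω hV hu (q := p) (y := 1)
    fun v => by rw [h.dotProduct_mode_map, one_mul]
  obtain ⟨hd, hc⟩ := h.corrections_eq_zero hω hV hu
  exact eq_zero_of_planar_of_initial_eq_zero (fun t => (hode t).1) (fun t => (hode t).2)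
    (by simpa [activityAtZero] using hc) (by simpa [adaptationAtZero] using hd) t

theorem frame_components_eq_zero_of_kernel (h : IsCriticalMode M e x p) (hω : 0 < ω) (hα : 0 < α)
    (hV : adaptiveLinearization ω α M p V = 0) (hu : circleResolvent (2 * π) _ V = u) (k : K)
    (t : ℝ) : e k ⬝ᵥ (u t).1 = 0 ∧ e k ⬝ᵥ (u t).2 = 0 := by
  rcases h.eigenvalue_lt_one_or k with hk | ⟨c, hc⟩
  · have hode := h.hasDerivAt_components_of_kernel hω.ne' hV hu (h.dotProduct_frame_map k)
    have : 0 < 1 - x k := sub_pos.2 hk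
    have htrace : ω⁻¹ * ((1 + α) * x k - 1) + -(ω⁻¹ * α) < 0 := by
      have : 0 < ω⁻¹ * ((1 + α) * (1 - x k)) := by positivity
      linarith
    have hdet : ω⁻¹ * ((1 + α) * x k - 1) * -(ω⁻¹ * α) - -ω⁻¹ * (ω⁻¹ * (ω ^ 2 + α ^ 2)) ≠ 0 := by
      have : 0 < ω⁻¹ ^ 2 * (ω ^ 2 + α * ((1 + α) * (1 - x k))) := by positivity
      nlinarith
    exact eq_zero_of_periodic_of_trace_neg two_pi_pos htrace hdet (fun t => (hode t).1)
      (fun t => (hode t).2) (periodic_comp_circ (fun θ => e k ⬝ᵥ (u θ).1))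
      (periodic_comp_circ (fun θ => e k ⬝ᵥ (u θ).2)) t
  · obtain ⟨h₁, h₂⟩ := h.mode_components_eq_zero_of_kernel hω.ne' hV hu t
    simp [hc, smul_dotProduct, h₁, h₂]

theorem isInvertible_adaptiveLinearization (h : IsCriticalMode M e x p) (hω : 0 < ω) (hα : 0 < α) :
    (adaptiveLinearization ω α M p).IsInvertible := by
  refine isInvertible_borderedLinearization hω.ne' _ isCompactOperator_circleResolvent
    fun V hV => ?_
  have hu (t : ℝ) : circleResolvent (2 * π) _ V t = 0 := by
    have hcomp (k : K) := h.frame_components_eq_zero_of_kernel hω hα hV rfl k t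
    exact Prod.ext (h.eq_zero_of_forall_dotProduct_eq_zero fun k => (hcomp k).1)
      (h.eq_zero_of_forall_dotProduct_eq_zero fun k => (hcomp k).2)
  refine continuousMap_circ_ext fun t => ?_
  have hderiv := hasDerivAt_circleResolvent V t
  simp only [hu, sub_zero] at hderiv
  exact hderiv.unique (hasDerivAt_const t 0)

end IsCriticalMode

end PeriodicProblem

section Hopf

open Real
open scoped Topology

theorem postcomp_harmonic1 {F G : Type*} [NormedAddCommGroup F] [NormedSpace ℝ F]
    [NormedAddCommGroup G] [NormedSpace ℝ G] (M : F →L[ℝ] G) (u v : F) :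
    postcomp M (harmonic1 u v) = harmonic1 (M u) (M v) :=
  continuousMap_circ_ext fun t => by simp

theorem postcomp_harmonic2 {F G : Type*} [NormedAddCommGroup F] [NormedSpace ℝ F]
    [NormedAddCommGroup G] [NormedSpace ℝ G] (M : F →L[ℝ] G) (w u v : F) :
    postcomp M (harmonic2 w u v) = harmonic2 (M w) (M u) (M v) :=
  continuousMap_circ_ext fun t => by simp

variable {I : Type*} [Fintype I] {M P : (I → ℝ) →L[ℝ] (I → ℝ)} {p b : I → ℝ} {ω α κ : ℝ}
  {W U Z : (I → ℝ) × (I → ℝ)} {Θ : ℝ × C(Circ, I → ℝ) → C(Circ, I → ℝ)}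

theorem postcomp_fst_criticalOrbit (ω α : ℝ) (p : I → ℝ) :
    postcomp (ContinuousLinearMap.fst ℝ _ _) (criticalOrbit ω α p) = harmonic1 p 0 :=
  postcomp_harmonic1 _ _ _

theorem smul_criticalVelocity (ω α : ℝ) (hMp : M p = p) :
    ω • criticalVelocity ω α p =
      postcomp (drive (1 + α) (ω ^ 2 + α ^ 2) M) (harmonic1 p 0) -
        postcomp (decay α) (criticalOrbit ω α p) := by
  refine continuousMap_circ_ext fun t => ?_
  simp only [criticalVelocity, criticalOrbit, postcomp_harmonic1, drive_apply, decay_apply, hMp,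
    map_zero, ContinuousMap.smul_apply, ContinuousMap.sub_apply, harmonic1_coe, Prod.smul_mk,
    Prod.neg_mk, Prod.mk_add_mk, smul_zero]
  ext i <;> simp <;> ring

theorem half_smul_postcomp_sq_harmonic1 (hPp : P p = p) (hPb : P (p ^ 2) = (4 : ℝ) • b) :
    (1 / 2 : ℝ) • postcomp P (postcomp P (harmonic1 p 0) ^ 2) = harmonic2 b b 0 := by
  refine continuousMap_circ_ext fun t => ?_
  have hsq : (cos t • p) ^ 2 = (cos t ^ 2) • p ^ 2 := smul_pow _ _ _
  rw [postcomp_harmonic1, hPp, map_zero]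
  simp only [ContinuousMap.smul_apply, postcomp_apply,
    ContinuousMap.pow_apply, harmonic1_coe, smul_zero, add_zero, hsq, map_smul, hPb,
    harmonic2_coe, cos_two_mul]
  module

theorem IsQuadraticResponse.smul_harmonic2 (h : IsQuadraticResponse ω α M b W U Z) :
    ω • harmonic2 0 ((2 : ℝ) • Z) (-((2 : ℝ) • U)) =
      postcomp (drive (1 + α) (ω ^ 2 + α ^ 2) M)
          (postcomp (ContinuousLinearMap.fst ℝ _ _) (harmonic2 W U Z) + harmonic2 b b 0) -
        postcomp (decay α) (harmonic2 W U Z) := by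
  refine continuousMap_circ_ext fun t => ?_
  have hsum : postcomp (ContinuousLinearMap.fst ℝ _ _) (harmonic2 W U Z) + harmonic2 b b 0 =
      harmonic2 (W.1 + b) (U.1 + b) Z.1 := continuousMap_circ_ext fun t => by
    simp only [ContinuousMap.add_apply, postcomp_harmonic2, harmonic2_coe,
      ContinuousLinearMap.coe_fst']
    module
  rw [hsum, postcomp_harmonic2, postcomp_harmonic2, ContinuousMap.sub_apply,
    ContinuousMap.smul_apply, harmonic2_coe, harmonic2_coe, harmonic2_coe, h.mean,
    eq_add_of_sub_eq h.cos, eq_add_of_sub_eq h.sin]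
  module

theorem dotProduct_cubicForcing (hP : ∀ u v, u ⬝ᵥ P v = P u ⬝ᵥ v) (hPp : P p = p)
    (hPb : P (p ^ 2) = (4 : ℝ) • b)
    (hκ : ∀ t : ℝ, p ⬝ᵥ Θ (0, harmonic1 p 0) t = κ * cos t ^ 3) (w u z : I → ℝ) (t : ℝ) :
    p ⬝ᵥ (postcomp P (postcomp P (harmonic1 p 0) * postcomp P (harmonic2 w u z)) +
        Θ (0, harmonic1 p 0)) t =
      4 * cos t * (b ⬝ᵥ w + (b ⬝ᵥ u) * cos (2 * t) + (b ⬝ᵥ z) * sin (2 * t)) + κ * cos t ^ 3 := by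
  have hprod (y : I → ℝ) : p ⬝ᵥ P ((cos t • p) * P y) = 4 * cos t * (b ⬝ᵥ y) := by
    have hsq : p ⬝ᵥ ((cos t • p) * P y) = cos t * (p ^ 2 ⬝ᵥ P y) := by
      simp only [dotProduct, Finset.mul_sum, Pi.mul_apply, Pi.smul_apply, Pi.pow_apply,
        smul_eq_mul]
      exact Finset.sum_congr rfl fun i _ => by ring
    rw [hP, hPp, hsq, hP, hPb, smul_dotProduct, smul_eq_mul]
    ring
  rw [ContinuousMap.add_apply, dotProduct_add, hκ, postcomp_harmonic1, hPp, map_zero,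
    postcomp_apply, ContinuousMap.mul_apply,
    postcomp_apply, harmonic1_coe, smul_zero, add_zero, hprod,
    harmonic2_coe]
  simp only [dotProduct_add, dotProduct_smul, smul_eq_mul]
  ring

theorem adaptiveField_smul {Φ : (I → ℝ) → I → ℝ}
    (hΦ : ∀ r (s : C(Circ, I → ℝ)) (t : ℝ),
      Φ (r • s t) = r • rescaledNonlinearity (postcomp P) Θ r s t)
    (u : C(Circ, (I → ℝ) × (I → ℝ))) (g h c r t : ℝ) :
    adaptiveField Φ M g α (h + c) ((r • u) t) =
      r • ((postcomp (drive h g M) + c • postcomp (drive 1 0 M)) (rescaledNonlinearity (postcomp P)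
        Θ r (postcomp (ContinuousLinearMap.fst ℝ _ _) u)) - postcomp (decay α) u) t := by
  have hdrive (v : I → ℝ) : drive (h + c) g M v = drive h g M v + c • drive 1 0 M v := by
    ext i <;> simp [add_mul]
  have hfst : (u t).1 = postcomp (ContinuousLinearMap.fst ℝ _ _) u t := rfl
  rw [adaptiveField, ContinuousMap.smul_apply, map_smul, Prod.smul_fst, hfst, hΦ, map_smul,
    ← smul_sub, hdrive]
  rfl

namespace IsCriticalMode

variable {K : Type*} [Fintype K] {e : K → I → ℝ} {x : K → ℝ}
  {V u : C(Circ, (I → ℝ) × (I → ℝ))}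

theorem adaptationAtZero_eq (h : IsCriticalMode M e x p) (hω : 0 < ω)
    (hP : ∀ u v, u ⬝ᵥ P v = P u ⬝ᵥ v) (hPp : P p = p) (hPb : P (p ^ 2) = (4 : ℝ) • b)
    (hκ : ∀ t : ℝ, p ⬝ᵥ Θ (0, harmonic1 p 0) t = κ * cos t ^ 3)
    (hV : adaptiveLinearization ω α M p V = postcomp (drive (1 + α) (ω ^ 2 + α ^ 2) M)
      (postcomp P (postcomp P (harmonic1 p 0) * postcomp P (harmonic2 W.1 U.1 Z.1)) +
        Θ (0, harmonic1 p 0)))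
    (hu : circleResolvent (2 * π) _ V = u) :
    adaptationAtZero p u = -2 * ((1 + α) * (3 * κ / 8) +
      2 * feedback ω α (b ⬝ᵥ W.1) (b ⬝ᵥ U.1) (b ⬝ᵥ Z.1)) := by
  have hsolv := h.adaptationAtZero_mul_add_integral_eq_zero hω.ne' hV hu
  simp only [dotProduct_cubicForcing hP hPp hPb hκ] at hsolv
  rw [integral_cubic_forcing] at hsolv
  have hmul : π * ω * (adaptationAtZero p u + 2 * ((1 + α) * (3 * κ / 8) +
      2 * feedback ω α (b ⬝ᵥ W.1) (b ⬝ᵥ U.1) (b ⬝ᵥ Z.1))) = 0 := by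
    rw [feedback]
    field_simp
    linear_combination 8 * hsolv
  rcases mul_eq_zero.1 hmul with h0 | h0
  · exact absurd h0 (mul_pos pi_pos hω).ne'
  · linarith

theorem hasDerivAt_criticalOrbit_add (ω α : ℝ) (p : I → ℝ) (W U Z : (I → ℝ) × (I → ℝ))
    (V : C(Circ, (I → ℝ) × (I → ℝ))) (r t : ℝ) :
    HasDerivAt (fun t : ℝ => (criticalOrbit ω α p + r • harmonic2 W U Z +
        r ^ 2 • circleResolvent (2 * π) _ V) t)
      ((criticalVelocity ω α p + r • harmonic2 0 ((2 : ℝ) • Z) (-((2 : ℝ) • U)) +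
        r ^ 2 • (V - circleResolvent (2 * π) _ V)) t) t :=
  ((hasDerivAt_harmonic1 _ _ t).add ((hasDerivAt_harmonic2 W U Z t).const_smul r)).add
    ((hasDerivAt_circleResolvent V t).const_smul (r ^ 2))

theorem exists_adaptive_branch (h : IsCriticalMode M e x p) (hω : 0 < ω) (hα : 0 < α)
    (hP : ∀ u v, u ⬝ᵥ P v = P u ⬝ᵥ v) (hPp : P p = p) (hPb : P (p ^ 2) = (4 : ℝ) • b)
    (hresponse : IsQuadraticResponse ω α M b W U Z)
    (hΘ : ContDiffAt ℝ 1 Θ (0, harmonic1 p 0))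
    (hκ : ∀ t : ℝ, p ⬝ᵥ Θ (0, harmonic1 p 0) t = κ * cos t ^ 3) :
    ∃ V : ℝ → C(Circ, (I → ℝ) × (I → ℝ)), ContDiffAt ℝ 1 V 0 ∧
      adaptationAtZero p (circleResolvent (2 * π) _ (V 0)) = -2 * ((1 + α) * (3 * κ / 8) +
        2 * feedback ω α (b ⬝ᵥ W.1) (b ⬝ᵥ U.1) (b ⬝ᵥ Z.1)) ∧
      ∀ᶠ r in 𝓝 0, ∀ u, u = circleResolvent (2 * π) _ (V r) →
        (ω + r ^ 2 * activityAtZero p u) • (criticalVelocity ω α p +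
          r • harmonic2 0 ((2 : ℝ) • Z) (-((2 : ℝ) • U)) + r ^ 2 • (V r - u)) =
        (postcomp (drive (1 + α) (ω ^ 2 + α ^ 2) M) + (r ^ 2 * adaptationAtZero p u) •
            postcomp (drive 1 0 M)) (rescaledNonlinearity (postcomp P) Θ r
          (postcomp (ContinuousLinearMap.fst ℝ _ _)
            (criticalOrbit ω α p + r • harmonic2 W U Z + r ^ 2 • u))) -
          postcomp (decay α) (criticalOrbit ω α p + r • harmonic2 W U Z + r ^ 2 • u) := by
  have hfst := postcomp_fst_criticalOrbit ω α p
  have hquad := half_smul_postcomp_sq_harmonic1 hPp hPb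
  have hT := h.isInvertible_adaptiveLinearization hω hα
  rw [adaptiveLinearization] at hT
  obtain ⟨V, hV0, hVd, hV⟩ := exists_branch_of_expansion (postcomp P) (Θ := Θ)
    (σ := postcomp (ContinuousLinearMap.fst ℝ _ _))
    (K := postcomp (drive (1 + α) (ω ^ 2 + α ^ 2) M)) (J := postcomp (drive 1 0 M))
    (A := postcomp (decay α)) (S := circleResolvent (2 * π) _) (c := activityAtZero p)
    (d := adaptationAtZero p) (U₀ := criticalOrbit ω α p) (U₁ := harmonic2 W U Z)
    (D₀ := criticalVelocity ω α p) (D₁ := harmonic2 0 ((2 : ℝ) • Z) (-((2 : ℝ) • U)))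
    (by rwa [hfst]) (by rw [hfst]; exact smul_criticalVelocity ω α h.map_mode)
    (by rw [hfst, hquad]; exact hresponse.smul_harmonic2) hT
  refine ⟨V, hVd, h.adaptationAtZero_eq hω hP hPp hPb hκ ?_ rfl, hV.mono ?_⟩
  · rw [adaptiveLinearization, hfst]
    rwa [hfst, postcomp_harmonic2] at hV0
  · rintro r hr _ rfl
    exact hr

theorem criticalOrbit_pi_ne (h : IsCriticalMode M e x p) (ω α : ℝ) :
    criticalOrbit ω α p ((π : ℝ) : Circ) ≠ criticalOrbit ω α p ((0 : ℝ) : Circ) := fun heq => by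
  have h0 := congrArg (fun y : (I → ℝ) × (I → ℝ) => p ⬝ᵥ y.1) heq
  simp only [zero_smul, add_zero, criticalOrbit, harmonic1_coe, cos_pi, sin_pi, cos_zero, sin_zero,
    Prod.smul_fst, dotProduct_smul, h.dotProduct_mode_self] at h0
  norm_num at h0

theorem bifurcatesToCycles_adaptiveField (h : IsCriticalMode M e x p) (hω : 0 < ω) (hα : 0 < α)
    (hP : ∀ u v, u ⬝ᵥ P v = P u ⬝ᵥ v) (hPp : P p = p) (hPb : P (p ^ 2) = (4 : ℝ) • b)
    (hresponse : IsQuadraticResponse ω α M b W U Z)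
    (hΘ : ContDiffAt ℝ 1 Θ (0, harmonic1 p 0))
    (hκ : ∀ t : ℝ, p ⬝ᵥ Θ (0, harmonic1 p 0) t = κ * cos t ^ 3)
    (hneg : (1 + α) * (3 * κ / 8) + 2 * feedback ω α (b ⬝ᵥ W.1) (b ⬝ᵥ U.1) (b ⬝ᵥ Z.1) < 0)
    {Φ : (I → ℝ) → I → ℝ}
    (hΦ : ∀ r (s : C(Circ, I → ℝ)) (t : ℝ),
      Φ (r • s t) = r • rescaledNonlinearity (postcomp P) Θ r s t) :
    BifurcatesToCycles (adaptiveField Φ M (ω ^ 2 + α ^ 2) α) (1 + α) := by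
  obtain ⟨V, hVd, hV0, hV⟩ := h.exists_adaptive_branch hω hα hP hPp hPb hresponse hΘ hκ
  have hresolvent := (circleResolvent (2 * π) ((I → ℝ) × (I → ℝ))).continuous
  have hd := (adaptationAtZero p).continuous
  set u : ℝ → C(Circ, (I → ℝ) × (I → ℝ)) := fun r => circleResolvent (2 * π) _ (V r)
  have hu : ContinuousAt u 0 := hresolvent.continuousAt.comp hVd.continuousAt
  have hdu : 0 < adaptationAtZero p (u 0) := by rw [hV0]; linarith
  have hw : ContinuousAt (fun r => ω + r ^ 2 * activityAtZero p (u r)) 0 := by fun_prop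
  have hbif := bifurcatesToCycles_of_branch
    (F := adaptiveField Φ M (ω ^ 2 + α ^ 2) α)
    (U := fun r => criticalOrbit ω α p + r • harmonic2 W U Z + r ^ 2 • u r)
    (w := fun r => ω + r ^ 2 * activityAtZero p (u r))
    (h := fun r => 1 + α + r ^ 2 * adaptationAtZero p (u r))
    (by fun_prop) hw (by simpa using hω) ?_ ?_ ?_ ?_
  · simpa using hbif
  · refine (hVd.eventually (by simp)).mono fun r hr => ?_
    have hur : ContinuousAt u r := hresolvent.continuousAt.comp hr.continuousAt
    fun_prop
  · have hdr : ContinuousAt (fun r => adaptationAtZero p (u r)) 0 := hd.continuousAt.comp hu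
    filter_upwards [(continuousAt_const.eventually_lt hdr hdu).filter_mono nhdsWithin_le_nhds,
      self_mem_nhdsWithin] with r hr hr0
    have := mul_pos (pow_pos hr0 2) hr
    simpa using this
  · filter_upwards [hV.filter_mono nhdsWithin_le_nhds,
      (hw.eventually (isOpen_ne.mem_nhds (by simpa using hω.ne'))).filter_mono
        nhdsWithin_le_nhds] with r hr hwr t
    refine ((hasDerivAt_criticalOrbit_add ω α p W U Z (V r) r t).const_smul r).congr_deriv ?_
    rw [adaptiveField_smul hΦ, ← hr _ rfl, eq_inv_smul_iff₀ hwr, smul_comm,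
      ContinuousMap.smul_apply]
  · simpa using h.criticalOrbit_pi_ne ω α

end IsCriticalMode

end Hopf

section SoftmaxExpansion

variable {X : Type*} [NormedCommRing X] [NormedAlgebra ℝ X]

/-- The terms of order at least three, divided by `r ^ 3`, in the expansion of `exp (r • P s)` at
`r = 0`, as a function of `y = (r, s)`. -/
noncomputable def expCubic (P : X →L[ℝ] X) (y : ℝ × X) : X := P y.2 ^ 3 * expTail (y.1 • P y.2)

/-- The quotient `(E (exp (r • P s)) - 1) / r ^ 2`, extended to `r = 0`, as a function of
`y = (r, s)`, for an averaging operator `E` that kills the range of `P`. -/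
noncomputable def softmaxMean (E P : X →L[ℝ] X) (y : ℝ × X) : X :=
  E ((1 / 2 : ℝ) • P y.2 ^ 2 + y.1 • expCubic P y)

/-- The quotient `P (exp (r • P s)) / r`, extended to `r = 0`, as a function of `y = (r, s)`, for a
projection `P` that kills `1`. -/
noncomputable def softmaxNumerator (P : X →L[ℝ] X) (y : ℝ × X) : X :=
  P y.2 + (y.1 / 2) • P (P y.2 ^ 2) + y.1 ^ 2 • P (expCubic P y)

/-- The terms of order at least three, divided by `r ^ 3`, in the expansion at `r = 0` of the
softmax `P (exp (r • P s)) / E (exp (r • P s))`, as a function of `y = (r, s)`. -/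
noncomputable def softmaxRemainder (E P : X →L[ℝ] X) (y : ℝ × X) : X :=
  P (expCubic P y) - softmaxNumerator P y * softmaxMean E P y *
    Ring.inverse (1 + y.1 ^ 2 • softmaxMean E P y)

variable {E P : X →L[ℝ] X}

theorem rescaledNonlinearity_softmaxRemainder_sub_mul {r : ℝ} {s : X}
    (hu : IsUnit (1 + r ^ 2 • softmaxMean E P (r, s))) :
    (rescaledNonlinearity P (softmaxRemainder E P) r s - (s - P s)) *
      (1 + r ^ 2 • softmaxMean E P (r, s)) = softmaxNumerator P (r, s) := by
  have hdecomp : rescaledNonlinearity P (softmaxRemainder E P) r s - (s - P s) =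
      softmaxNumerator P (r, s) - r ^ 2 • (softmaxNumerator P (r, s) * softmaxMean E P (r, s) *
        Ring.inverse (1 + r ^ 2 • softmaxMean E P (r, s))) := by
    rw [rescaledNonlinearity, softmaxRemainder, smul_sub]
    conv_rhs => lhs; rw [softmaxNumerator]
    abel
  rw [hdecomp, sub_mul, smul_mul_assoc, mul_assoc _ (Ring.inverse _), Ring.inverse_mul_cancel _ hu,
    mul_add, mul_one, mul_one, mul_smul_comm, add_sub_cancel_right]

variable [CompleteSpace X]

theorem contDiff_expCubic : ContDiff ℝ 1 (expCubic P) := by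
  have htail : ContDiff ℝ 1 (fun y : ℝ × X => expTail (y.1 • P y.2)) :=
    contDiff_expTail.comp (by fun_prop)
  unfold expCubic
  fun_prop

theorem contDiffAt_softmaxRemainder (s : X) : ContDiffAt ℝ 1 (softmaxRemainder E P) (0, s) := by
  have hcubic : ContDiffAt ℝ 1 (expCubic P) (0, s) := contDiff_expCubic.contDiffAt
  have hmean : ContDiffAt ℝ 1 (softmaxMean E P) (0, s) := by
    unfold softmaxMean
    fun_prop
  have hinv : ContDiffAt ℝ 1 (fun y : ℝ × X => Ring.inverse (1 + y.1 ^ 2 • softmaxMean E P y))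
      (0, s) := by
    refine ContDiffAt.comp (0, s) (g := Ring.inverse) ?_ (by fun_prop)
    simpa using contDiffAt_ringInverse ℝ (n := 1) (1 : Xˣ)
  unfold softmaxRemainder softmaxNumerator
  fun_prop

theorem expTail_zero : expTail (0 : X) = (1 / 6 : ℝ) • (1 : X) := by
  have hsum := hasSum_single (f := fun n : ℕ => ((n + 3).factorial : ℝ)⁻¹ • (0 : X) ^ n) 0
    fun n hn => by simp [hn]
  rw [(hasSum_expTail (0 : X)).unique hsum]
  norm_num [Nat.factorial]

theorem softmaxRemainder_zero (s : X) :
    softmaxRemainder E P (0, s) =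
      (1 / 6 : ℝ) • P (P s ^ 3) - (1 / 2 : ℝ) • (P s * E (P s ^ 2)) := by
  simp [softmaxRemainder, softmaxNumerator, softmaxMean, expCubic, expTail_zero]

end SoftmaxExpansion

section BlockMean

variable {n m : ℕ}

variable (n m) in
/-- The blockwise mean on `ℝ^{mn}`. -/
noncomputable def blockMean : (Fin n × Fin m → ℝ) →L[ℝ] (Fin n × Fin m → ℝ) :=
  LinearMap.toContinuousLinearMap
    { toFun := fun v p => (∑ l, v (p.1, l)) / m
      map_add' := fun u v => by
        ext p
        simp [Finset.sum_add_distrib, add_div]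
      map_smul' := fun c v => by
        ext p
        simp [← Finset.mul_sum, mul_div_assoc] }

variable (n m) in
/-- The projection of `ℝ^{mn}` onto the vectors of blockwise mean zero, equal to `m • Λ`. -/
noncomputable def blockProj : (Fin n × Fin m → ℝ) →L[ℝ] (Fin n × Fin m → ℝ) := 1 - blockMean n m

theorem blockMean_apply (v : Fin n × Fin m → ℝ) (p : Fin n × Fin m) :
    blockMean n m v p = (∑ l, v (p.1, l)) / m := rfl

theorem blockProj_apply (v : Fin n × Fin m → ℝ) : blockProj n m v = v - blockMean n m v := rfl

theorem blockProj_eq_self_iff {v : Fin n × Fin m → ℝ} :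
    blockProj n m v = v ↔ blockMean n m v = 0 := by
  rw [blockProj_apply, sub_eq_self]

theorem dotProduct_blockMean (u v : Fin n × Fin m → ℝ) :
    u ⬝ᵥ blockMean n m v = blockMean n m u ⬝ᵥ v := by
  simp only [dotProduct, blockMean_apply, Fintype.sum_prod_type, div_mul_eq_mul_div, mul_div_assoc',
    ← Finset.sum_div, ← Finset.mul_sum, ← Finset.sum_mul]

theorem dotProduct_blockProj (u v : Fin n × Fin m → ℝ) :
    u ⬝ᵥ blockProj n m v = blockProj n m u ⬝ᵥ v := by
  rw [blockProj_apply, blockProj_apply, dotProduct_sub, sub_dotProduct, dotProduct_blockMean]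

variable [NeZero m]

theorem blockMean_one : blockMean n m 1 = 1 := by
  ext p
  simp [blockMean_apply, NeZero.ne m]

theorem blockMean_blockMean (v : Fin n × Fin m → ℝ) :
    blockMean n m (blockMean n m v) = blockMean n m v := by
  ext p
  simp [blockMean_apply, mul_div_cancel₀, NeZero.ne m]

theorem blockMean_blockProj (v : Fin n × Fin m → ℝ) : blockMean n m (blockProj n m v) = 0 := by
  rw [blockProj_apply, map_sub, blockMean_blockMean, sub_self]

theorem blockProj_blockMean (v : Fin n × Fin m → ℝ) : blockProj n m (blockMean n m v) = 0 := by
  rw [blockProj_apply, blockMean_blockMean, sub_self]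

theorem blockProj_blockProj (v : Fin n × Fin m → ℝ) :
    blockProj n m (blockProj n m v) = blockProj n m v :=
  blockProj_eq_self_iff.2 (blockMean_blockProj v)

end BlockMean

section Softmax

variable {n m : ℕ}

theorem fbar_blockProj (s : Fin n × Fin m → ℝ) : fbar n m (blockProj n m s) = fbar n m s := by
  ext p
  simp only [fbar, softmax, blockProj_apply, Pi.sub_apply, Real.exp_sub, blockMean_apply,
    ← Finset.sum_div]
  rw [div_div_div_cancel_right₀ (Real.exp_pos _).ne']

theorem sum_exp_block_pos [NeZero m] (s : Fin n × Fin m → ℝ) (r : Fin n) :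
    0 < ∑ l, Real.exp (s (r, l)) :=
  Finset.sum_pos (fun _ _ => Real.exp_pos _) Finset.univ_nonempty

theorem blockMean_exp_pos [NeZero m] (s : Fin n × Fin m → ℝ) (p : Fin n × Fin m) :
    0 < blockMean n m (Real.exp ∘ s) p :=
  div_pos (sum_exp_block_pos s p.1) (Nat.cast_pos.2 (NeZero.pos m))

theorem smul_fbar_mul_blockMean_exp [NeZero m] (s : Fin n × Fin m → ℝ) :
    ((m : ℝ) • fbar n m s) * blockMean n m (Real.exp ∘ s) = blockProj n m (Real.exp ∘ s) := by
  ext p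
  have hm : (m : ℝ) ≠ 0 := NeZero.ne _
  have hsum := (sum_exp_block_pos s p.1).ne'
  simp only [fbar, softmax, blockProj_apply, blockMean_apply, Pi.mul_apply, Pi.smul_apply,
    Pi.sub_apply, smul_eq_mul, Function.comp_apply]
  field_simp

theorem blockMean_fbar [NeZero m] (s : Fin n × Fin m → ℝ) : blockMean n m (fbar n m s) = 0 := by
  ext p
  simp [blockMean_apply, fbar, softmax, ← Finset.sum_div, div_self (sum_exp_block_pos s p.1).ne']

variable (n m) in
/-- The centered softmax, normalized to have derivative `blockProj n m` at the origin and augmented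
by the blockwise mean to have derivative `1` there. -/
noncomputable def augmentedSoftmax (s : Fin n × Fin m → ℝ) : Fin n × Fin m → ℝ :=
  (m : ℝ) • fbar n m s + blockMean n m s

theorem blockMean_augmentedSoftmax [NeZero m] (s : Fin n × Fin m → ℝ) :
    blockMean n m (augmentedSoftmax n m s) = blockMean n m s := by
  rw [augmentedSoftmax, map_add, map_smul, blockMean_fbar, blockMean_blockMean, smul_zero,
    zero_add]

variable (P : (Fin n × Fin m → ℝ) →L[ℝ] (Fin n × Fin m → ℝ)) (r : ℝ)
  (s : C(Circ, Fin n × Fin m → ℝ)) (θ : Circ)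

theorem expCubic_postcomp_apply (p : Fin n × Fin m) :
    expCubic (postcomp P) (r, s) θ p = P (s θ) p ^ 3 * expTail (r * P (s θ) p) := by
  have htail := map_expTail ((Pi.evalAlgHom ℝ (fun _ : Fin n × Fin m => ℝ) p).comp
    (ContinuousMap.evalAlgHom ℝ (Fin n × Fin m → ℝ) θ))
    ((continuous_apply p).comp (continuous_eval_const θ)) (r • postcomp P s)
  simp only [AlgHom.comp_apply, Pi.evalAlgHom_apply, ContinuousMap.evalAlgHom_apply,
    ContinuousMap.smul_apply, postcomp_apply, Pi.smul_apply, smul_eq_mul] at htail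
  simp [expCubic, htail]

theorem exp_comp_smul_eq_add_expCubic :
    Real.exp ∘ (r • P (s θ)) = 1 + r • P (s θ) + (r ^ 2 / 2) • P (s θ) ^ 2 +
      r ^ 3 • expCubic (postcomp P) (r, s) θ := by
  ext p
  simp only [Function.comp_apply, exp_eq_add_expTail, expCubic_postcomp_apply, Pi.add_apply,
    Pi.smul_apply, Pi.one_apply, Pi.pow_apply, smul_eq_mul]
  ring

variable [NeZero m]

theorem blockMean_exp_smul_blockProj :
    blockMean n m (Real.exp ∘ (r • blockProj n m (s θ))) =
      1 + r ^ 2 • softmaxMean (postcomp (blockMean n m)) (postcomp (blockProj n m)) (r, s) θ := by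
  rw [exp_comp_smul_eq_add_expCubic]
  simp only [softmaxMean, map_add, map_smul, blockMean_one, blockMean_blockProj, postcomp_apply,
    ContinuousMap.add_apply, ContinuousMap.smul_apply, ContinuousMap.pow_apply]
  module

theorem blockProj_exp_smul_blockProj :
    blockProj n m (Real.exp ∘ (r • blockProj n m (s θ))) =
      r • softmaxNumerator (postcomp (blockProj n m)) (r, s) θ := by
  have hone : blockProj n m 1 = 0 := by rw [blockProj_apply, blockMean_one, sub_self]
  rw [exp_comp_smul_eq_add_expCubic]
  simp only [softmaxNumerator, map_add, map_smul, hone, blockProj_blockProj, postcomp_apply,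
    ContinuousMap.add_apply, ContinuousMap.smul_apply, ContinuousMap.pow_apply]
  module

theorem isUnit_one_add_softmaxMean :
    IsUnit (1 + r ^ 2 • softmaxMean (postcomp (blockMean n m)) (postcomp (blockProj n m))
      (r, s)) := by
  refine ContinuousMap.isUnit_iff_forall_isUnit _ |>.2 fun θ => Pi.isUnit_iff.2 fun p => ?_
  have hpos := blockMean_exp_pos (r • blockProj n m (s θ)) p
  rw [blockMean_exp_smul_blockProj] at hpos
  exact hpos.ne'.isUnit

theorem augmentedSoftmax_smul_apply :
    augmentedSoftmax n m (r • s θ) = r • rescaledNonlinearity (postcomp (blockProj n m))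
      (softmaxRemainder (postcomp (blockMean n m)) (postcomp (blockProj n m))) r s θ := by
  set R := rescaledNonlinearity (postcomp (blockProj n m))
    (softmaxRemainder (postcomp (blockMean n m)) (postcomp (blockProj n m))) r s
  have hunit : IsUnit (blockMean n m (Real.exp ∘ (r • blockProj n m (s θ)))) :=
    Pi.isUnit_iff.2 fun p => (blockMean_exp_pos _ p).ne'.isUnit
  have hR : (R θ - blockMean n m (s θ)) *
      blockMean n m (Real.exp ∘ (r • blockProj n m (s θ))) =
        softmaxNumerator (postcomp (blockProj n m)) (r, s) θ := by
    rw [blockMean_exp_smul_blockProj,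
      ← rescaledNonlinearity_softmaxRemainder_sub_mul (isUnit_one_add_softmaxMean r s)]
    simp [R, blockProj_apply]
  have hfbar : (m : ℝ) • fbar n m (r • s θ) = r • (R θ - blockMean n m (s θ)) := by
    refine hunit.mul_right_cancel ?_
    rw [← fbar_blockProj, map_smul, smul_fbar_mul_blockMean_exp, blockProj_exp_smul_blockProj,
      smul_mul_assoc, hR]
  rw [augmentedSoftmax, hfbar, map_smul]
  module

end Softmax

theorem exists_isCriticalMode {I : Type*} [Fintype I] {M : (I → ℝ) →L[ℝ] (I → ℝ)} {p : I → ℝ}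
    (hM : ∀ u v, u ⬝ᵥ M v = M u ⬝ᵥ v) (hle : ∀ (y : ℝ) v, v ≠ 0 → M v = y • v → y ≤ 1)
    (hsimple : ∀ v, M v = v → ∃ c : ℝ, v = c • p) (hp : M p = p) (hpp : p ⬝ᵥ p = 1) :
    ∃ (e : I → I → ℝ) (x : I → ℝ), IsCriticalMode M e x p := by
  classical
  have hherm : (LinearMap.toMatrix' (M : (I → ℝ) →ₗ[ℝ] (I → ℝ))).IsHermitian := by
    ext i j
    simpa [LinearMap.toMatrix'_apply] using (hM (Pi.single i 1) (Pi.single j 1)).symm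
  have hmap (i : I) : M (hherm.eigenvectorBasis i) =
      hherm.eigenvalues i • (hherm.eigenvectorBasis i : I → ℝ) := by
    simpa only [LinearMap.toMatrix'_mulVec, ContinuousLinearMap.coe_coe]
      using hherm.mulVec_eigenvectorBasis i
  have hne (i : I) : (hherm.eigenvectorBasis i : I → ℝ) ≠ 0 := fun hzero =>
    hherm.eigenvectorBasis.orthonormal.ne_zero i (by ext j; exact congrFun hzero j)
  refine ⟨fun i => hherm.eigenvectorBasis i, hherm.eigenvalues, fun v => ?_, hmap,
    fun i => hle _ _ (hne i) (hmap i), hp, hpp, fun i => ?_⟩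
  · have hsum := congrArg WithLp.ofLp (hherm.eigenvectorBasis.sum_repr' (WithLp.toLp 2 v))
    simpa only [WithLp.ofLp_sum, WithLp.ofLp_smul, EuclideanSpace.inner_eq_star_dotProduct,
      star_trivial, dotProduct_comm v] using hsum
  · refine (hle _ _ (hne i) (hmap i)).lt_or_eq.imp_right fun heq => hsimple _ ?_
    rw [hmap, heq, one_smul]

section WeightMatrix

variable {n m : ℕ} {W : Matrix (Fin n × Fin m) (Fin n × Fin m) ℝ}

theorem blockSum_comm_of_isSymm [NeZero m] {lam : Fin n → Fin n → ℝ} (hW : W.IsSymm)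
    (hrow : ∀ (i k : Fin n) (j : Fin m), ∑ l : Fin m, W (i, j) (k, l) = lam i k) (i k : Fin n) :
    lam i k = lam k i := by
  have hsum : ∑ _j : Fin m, lam i k = ∑ _l : Fin m, lam k i := by
    calc
      _ = ∑ j, ∑ l, W (i, j) (k, l) := by simp only [hrow]
      _ = ∑ l, ∑ j, W (k, l) (i, j) := by
        rw [Finset.sum_comm]
        exact Finset.sum_congr rfl fun l _ => Finset.sum_congr rfl fun j _ => hW.apply _ _
      _ = _ := by simp only [hrow]
  simpa [NeZero.ne m] using hsum

theorem mulVec_blockMean [NeZero m] {lam : Fin n → Fin n → ℝ} (hW : W.IsSymm)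
    (hrow : ∀ (i k : Fin n) (j : Fin m), ∑ l : Fin m, W (i, j) (k, l) = lam i k)
    (v : Fin n × Fin m → ℝ) : W *ᵥ blockMean n m v = blockMean n m (W *ᵥ v) := by
  ext p
  have hcol (k : Fin n) (l : Fin m) : ∑ j, W (p.1, j) (k, l) = lam p.1 k := by
    rw [blockSum_comm_of_isSymm hW hrow, ← hrow k p.1 l]
    exact Finset.sum_congr rfl fun j _ => hW.apply _ _
  have hrow' (k : Fin n) : ∑ l, W p (k, l) = lam p.1 k := hrow p.1 k p.2
  simp only [mulVec, dotProduct, blockMean_apply, Fintype.sum_prod_type]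
  conv_rhs => rw [Finset.sum_comm, Finset.sum_div]
  refine Finset.sum_congr rfl fun k _ => ?_
  rw [← Finset.sum_mul, hrow', Finset.sum_comm, mul_div_assoc', Finset.mul_sum]
  simp only [← Finset.sum_mul, hcol]

variable (W) in
/-- The matrix `W` restricted to vectors of blockwise mean zero and extended by zero, equal to
`m • W * Λ`. -/
noncomputable def weightOp : (Fin n × Fin m → ℝ) →L[ℝ] (Fin n × Fin m → ℝ) :=
  LinearMap.toContinuousLinearMap W.mulVecLin ∘L blockProj n m

theorem weightOp_apply (v : Fin n × Fin m → ℝ) : weightOp W v = W *ᵥ blockProj n m v := rfl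

theorem Lam_mulVec (v : Fin n × Fin m → ℝ) : Lam n m *ᵥ v = (1 / (m : ℝ)) • blockProj n m v := by
  ext p
  simp only [Lam, mulVec, dotProduct, of_apply, Fintype.sum_prod_type, Pi.smul_apply, smul_eq_mul,
    blockProj_apply, Pi.sub_apply, blockMean_apply, ite_mul, zero_mul, sub_mul,
    Finset.sum_ite_irrel, Finset.sum_const_zero, Finset.sum_ite_eq, Finset.mem_univ, if_true,
    Finset.sum_sub_distrib, ← Finset.mul_sum]
  ring

theorem mul_Lam_mulVec (v : Fin n × Fin m → ℝ) :
    (W * Lam n m) *ᵥ v = (1 / (m : ℝ)) • weightOp W v := by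
  rw [← mulVec_mulVec, Lam_mulVec, mulVec_smul, weightOp_apply]

theorem mem_eigenspace_mul_Lam {v : Fin n × Fin m → ℝ} {y : ℝ} (hv : weightOp W v = y • v) :
    v ∈ Module.End.eigenspace (toLin' (W * Lam n m)) (y / m) := by
  rw [Module.End.mem_eigenspace_iff, toLin'_apply, mul_Lam_mulVec, hv, smul_smul,
    one_div_mul_eq_div]

theorem dotProduct_weightOp (hW : W.IsSymm)
    (hcomm : ∀ v, W *ᵥ blockMean n m v = blockMean n m (W *ᵥ v)) (u v : Fin n × Fin m → ℝ) :
    u ⬝ᵥ weightOp W v = weightOp W u ⬝ᵥ v := by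
  have hproj : W *ᵥ blockProj n m u = blockProj n m (W *ᵥ u) := by
    rw [blockProj_apply, blockProj_apply, mulVec_sub, hcomm]
  rw [weightOp_apply, weightOp_apply, dotProduct_mulVec, ← mulVec_transpose, hW.eq,
    dotProduct_blockProj, hproj]

variable [NeZero m]

theorem blockMean_weightOp (hcomm : ∀ v, W *ᵥ blockMean n m v = blockMean n m (W *ᵥ v))
    (v : Fin n × Fin m → ℝ) : blockMean n m (weightOp W v) = 0 := by
  rw [weightOp_apply, ← hcomm, blockMean_blockProj, mulVec_zero]

theorem weightOp_augmentedSoftmax (s : Fin n × Fin m → ℝ) :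
    weightOp W (augmentedSoftmax n m s) = (m : ℝ) • W *ᵥ fbar n m s := by
  rw [weightOp_apply, augmentedSoftmax, map_add, map_smul, blockProj_blockMean, add_zero,
    blockProj_eq_self_iff.2 (blockMean_fbar s), mulVec_smul]

theorem exists_isCriticalMode_weightOp (hW : W.IsSymm)
    (hcomm : ∀ v, W *ᵥ blockMean n m v = blockMean n m (W *ᵥ v))
    (hmax : ∀ x : ℝ, Module.End.HasEigenvalue (toLin' (W * Lam n m)) x → x ≤ 1 / m)
    (hsimple : Module.finrank ℝ (Module.End.eigenspace (toLin' (W * Lam n m)) (1 / m)) = 1)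
    {p : Fin n × Fin m → ℝ} (hp : weightOp W p = p) (hpp : p ⬝ᵥ p = 1) :
    ∃ (e : Fin n × Fin m → Fin n × Fin m → ℝ) (x : Fin n × Fin m → ℝ),
      IsCriticalMode (weightOp W) e x p := by
  have hm : (0 : ℝ) < m := Nat.cast_pos.2 (NeZero.pos m)
  refine exists_isCriticalMode (dotProduct_weightOp hW hcomm) (fun y v hv hy => ?_)
    (fun v hv => ?_) hp hpp
  · exact (div_le_div_iff_of_pos_right hm).1
      (hmax _ (Module.End.hasEigenvalue_of_hasEigenvector ⟨mem_eigenspace_mul_Lam hy, hv⟩))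
  · have hp0 : p ≠ 0 := by
      rintro rfl
      simp at hpp
    obtain ⟨c, hc⟩ := (finrank_eq_one_iff_of_nonzero'
      (⟨p, mem_eigenspace_mul_Lam (hp.trans (one_smul ℝ p).symm)⟩ : Module.End.eigenspace _ _)
      (by simpa using hp0)).1 hsimple ⟨v, mem_eigenspace_mul_Lam (hv.trans (one_smul ℝ v).symm)⟩
    exact ⟨c, (congrArg Subtype.val hc).symm⟩

end WeightMatrix

section SoftmaxField

variable {n m : ℕ} {W : Matrix (Fin n × Fin m) (Fin n × Fin m) ℝ}

/-- The vector field of the system `s' = μ • W f̄(s) - s - a`, `a' = g • f̄(s) - α • a` on the pairs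
`u = (s, a)`. -/
noncomputable def softmaxField (W : Matrix (Fin n × Fin m) (Fin n × Fin m) ℝ) (g α μ : ℝ)
    (u : (Fin n × Fin m → ℝ) × (Fin n × Fin m → ℝ)) :
    (Fin n × Fin m → ℝ) × (Fin n × Fin m → ℝ) :=
  (μ • W *ᵥ fbar n m u.1 - u.1 - u.2, g • fbar n m u.1 - α • u.2)

variable [NeZero m] {g α h : ℝ} {x : ℝ → (Fin n × Fin m → ℝ) × (Fin n × Fin m → ℝ)}

-- The blockwise means of `s` and `a` solve the damped linear system `ξ' = -ξ - η`,
-- `η' = g ξ - α η`, which has no periodic solution but zero.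
theorem IsCycle.blockMean_fst_eq_zero
    (hx : IsCycle (adaptiveField (augmentedSoftmax n m) (weightOp W) g α h) x)
    (hcomm : ∀ v, W *ᵥ blockMean n m v = blockMean n m (W *ᵥ v)) (hα : 0 < α) (hg : 0 < g) (t : ℝ) :
    blockMean n m (x t).1 = 0 := by
  obtain ⟨T, hT, hperiodic⟩ := hx.exists_period
  ext p
  set L : (Fin n × Fin m → ℝ) →L[ℝ] ℝ := ContinuousLinearMap.proj p ∘L blockMean n m
  have hLW (v : Fin n × Fin m → ℝ) : L (weightOp W v) = 0 :=
    congrFun (blockMean_weightOp hcomm v) p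
  have hLΦ (v : Fin n × Fin m → ℝ) : L (augmentedSoftmax n m v) = L v :=
    congrFun (blockMean_augmentedSoftmax v) p
  refine (eq_zero_of_periodic_of_trace_neg (a := -1) (b := -1) (c := g) (d := -α)
    (ξ := fun t => L (x t).1) (η := fun t => L (x t).2) hT (by linarith) (by linarith)
    (fun t => ?_) (fun t => ?_) (hperiodic.comp fun u => L u.1) (hperiodic.comp fun u => L u.2) t).1
  · refine (L.hasFDerivAt.comp_hasDerivAt t (hx.hasDerivAt t).fst).congr_deriv ?_
    simp only [adaptiveField, drive_apply, decay_apply, Prod.fst_sub, map_sub, map_smul, map_add,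
      hLW, smul_eq_mul]
    ring
  · refine (L.hasFDerivAt.comp_hasDerivAt t (hx.hasDerivAt t).snd).congr_deriv ?_
    simp only [adaptiveField, drive_apply, decay_apply, Prod.snd_sub, map_sub, map_smul, hLΦ,
      smul_eq_mul]
    ring

theorem IsCycle.isCycle_softmaxField
    (hx : IsCycle (adaptiveField (augmentedSoftmax n m) (weightOp W) g α h) x)
    (hcomm : ∀ v, W *ᵥ blockMean n m v = blockMean n m (W *ᵥ v)) (hα : 0 < α) (hg : 0 < g) :
    IsCycle (softmaxField W (m * g) α (m * h)) x := by
  refine ⟨fun t => ?_, hx.exists_period, hx.nonconstant⟩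
  convert hx.hasDerivAt t using 1
  rw [adaptiveField, drive_apply, decay_apply, weightOp_augmentedSoftmax, augmentedSoftmax,
    hx.blockMean_fst_eq_zero hcomm hα hg, add_zero, smul_smul, smul_smul, mul_comm g, mul_comm h,
    Prod.mk_sub_mk, ← sub_sub, softmaxField]

end SoftmaxField

section CubicCoefficient

variable {n m : ℕ} {p : Fin n × Fin m → ℝ}

/-- The coefficient of `cos³ t` in the cubic term of the softmax along the critical oscillation
`cos t • p`. -/
noncomputable def cubicCoefficient (p : Fin n × Fin m → ℝ) : ℝ :=
  p ⬝ᵥ p ^ 3 / 6 - p ⬝ᵥ (p * blockMean n m (p ^ 2)) / 2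

theorem dotProduct_softmaxRemainder_harmonic1 (hp : blockProj n m p = p) (t : ℝ) :
    p ⬝ᵥ softmaxRemainder (postcomp (blockMean n m)) (postcomp (blockProj n m))
        (0, harmonic1 p 0) (t : Circ) = cubicCoefficient p * Real.cos t ^ 3 := by
  rw [softmaxRemainder_zero, cubicCoefficient]
  simp only [ContinuousMap.sub_apply, ContinuousMap.smul_apply, ContinuousMap.mul_apply,
    ContinuousMap.pow_apply, postcomp_apply, harmonic1_coe, smul_zero, add_zero, map_smul, hp,
    smul_pow, dotProduct_sub, dotProduct_smul, smul_mul_smul_comm, dotProduct_blockProj,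
    smul_eq_mul]
  ring

theorem dotProduct_cube (p : Fin n × Fin m → ℝ) : p ⬝ᵥ p ^ 3 = ∑ r, ∑ t, p (r, t) ^ 4 := by
  simp only [dotProduct, Fintype.sum_prod_type, Pi.pow_apply, ← pow_succ']

theorem dotProduct_mul_blockMean_sq (p : Fin n × Fin m → ℝ) :
    p ⬝ᵥ (p * blockMean n m (p ^ 2)) = (∑ r, (∑ t, p (r, t) ^ 2) ^ 2) / m := by
  simp only [dotProduct, Fintype.sum_prod_type, Pi.pow_apply, Pi.mul_apply, blockMean_apply,
    ← mul_assoc, ← sq, ← Finset.sum_mul, ← mul_div_assoc, ← Finset.sum_div]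

theorem cubicCoefficient_nonpos
    (h : ∑ r, ∑ t, p (r, t) ^ 4 ≤ (3 / m) * ∑ r, (∑ t, p (r, t) ^ 2) ^ 2) :
    cubicCoefficient p ≤ 0 := by
  rw [div_mul_eq_mul_div, mul_div_assoc] at h
  rw [cubicCoefficient, dotProduct_cube, dotProduct_mul_blockMean_sq]
  linarith

theorem cubicCoefficient_neg (hp0 : p ≠ 0) (hp : blockProj n m (p ^ 2) = 0) :
    cubicCoefficient p < 0 := by
  have hpos : 0 < p ^ 2 ⬝ᵥ p ^ 2 := by
    simpa using dotProduct_star_self_pos_iff.2 (pow_ne_zero 2 hp0)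
  rw [blockProj_apply, sub_eq_zero] at hp
  have hquartic : p ⬝ᵥ p ^ 3 = p ^ 2 ⬝ᵥ p ^ 2 := by
    simp only [dotProduct, Pi.pow_apply]
    exact Finset.sum_congr rfl fun i _ => by ring
  rw [cubicCoefficient, ← hp, ← pow_succ', hquartic]
  linarith

theorem blockProj_sq_eq_zero_of_two {p : Fin n × Fin 2 → ℝ} (hp : blockMean n 2 p = 0) :
    blockProj n 2 (p ^ 2) = 0 := by
  ext ⟨r, t⟩
  have hmean : p (r, 0) + p (r, 1) = 0 := by
    simpa [blockMean_apply, Fin.sum_univ_two] using congrFun hp (r, 0)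
  have hopp : p (r, 1) = -p (r, 0) := by linarith
  fin_cases t <;> simp [blockProj_apply, blockMean_apply, Fin.sum_univ_two, hopp]

theorem sum_pow_four_of_three {p : Fin n × Fin 3 → ℝ} (hp : blockMean n 3 p = 0) (r : Fin n) :
    ∑ t, p (r, t) ^ 4 = (∑ t, p (r, t) ^ 2) ^ 2 / 2 := by
  have hmean : p (r, 0) + p (r, 1) + p (r, 2) = 0 := by
    simpa [blockMean_apply, Fin.sum_univ_three] using congrFun hp (r, 0)
  have hlast : p (r, 2) = -p (r, 0) - p (r, 1) := by linarith
  simp only [Fin.sum_univ_three, hlast]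
  ring

end CubicCoefficient

theorem IsCriticalMode.exists_response_of_nonpos {I K : Type*} [Fintype I] [Fintype K]
    {M : (I → ℝ) →L[ℝ] (I → ℝ)} {e : K → I → ℝ} {x : K → ℝ} {p b : I → ℝ} {ω α κ : ℝ}
    (h : IsCriticalMode M e x p) (hω : 0 < ω) (hα : 0 < α) (hκ : κ ≤ 0) (hκb : b = 0 → κ < 0)
    (hb : b = 0 ∨ α < 1 ∧ 1 + 2 * α ≤ ω ^ 2) :
    ∃ W U Z : (I → ℝ) × (I → ℝ), IsQuadraticResponse ω α M b W U Z ∧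
      (1 + α) * (3 * κ / 8) + 2 * feedback ω α (b ⬝ᵥ W.1) (b ⬝ᵥ U.1) (b ⬝ᵥ Z.1) < 0 := by
  by_cases hb0 : b = 0
  · subst hb0
    refine ⟨0, 0, 0, IsQuadraticResponse.zero, ?_⟩
    have hcubic : (1 + α) * κ < 0 := mul_neg_of_pos_of_neg (by linarith) (hκb rfl)
    simp only [feedback, zero_dotProduct]
    linarith
  · obtain ⟨hα1, hωα⟩ := hb.resolve_left hb0
    obtain ⟨W, U, Z, hresponse, hfeedback⟩ := h.exists_isQuadraticResponse hω hα hα1 hωα hb0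
    have hcubic : (1 + α) * κ ≤ 0 := mul_nonpos_of_nonneg_of_nonpos (by linarith) hκ
    exact ⟨W, U, Z, hresponse, by linarith⟩

section SoftmaxBifurcation

variable {n m : ℕ} {α : ℝ} {W : Matrix (Fin n × Fin m) (Fin n × Fin m) ℝ} {p : Fin n × Fin m → ℝ}

theorem IsCriticalMode.bifurcatesToCycles_softmaxField [NeZero m] {K : Type*} [Fintype K]
    {e : K → Fin n × Fin m → ℝ} {x : K → ℝ} (h : IsCriticalMode (weightOp W) e x p)
    (hcomm : ∀ v, W *ᵥ blockMean n m v = blockMean n m (W *ᵥ v)) (hα : 0 < α) {ω : ℝ} (hω : 0 < ω)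
    (hcubic : cubicCoefficient p ≤ 0)
    (hcase : blockProj n m (p ^ 2) = 0 ∨ α < 1 ∧ 1 + 2 * α ≤ ω ^ 2) :
    BifurcatesToCycles (softmaxField W (m * (ω ^ 2 + α ^ 2)) α) (m * (1 + α)) := by
  have hp : blockProj n m p = p :=
    blockProj_eq_self_iff.2 (by rw [← h.map_mode, blockMean_weightOp hcomm])
  have hp0 : p ≠ 0 := by
    rintro rfl
    simpa using h.dotProduct_mode_self
  have hb {b : Fin n × Fin m → ℝ} : (4 : ℝ)⁻¹ • b = 0 ↔ b = 0 := by simp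
  obtain ⟨Y, U, Z, hresponse, hneg⟩ := h.exists_response_of_nonpos
    (b := (4 : ℝ)⁻¹ • blockProj n m (p ^ 2)) hω hα hcubic
    (fun hb0 => cubicCoefficient_neg hp0 (hb.1 hb0)) (hcase.imp_left hb.2)
  exact (h.bifurcatesToCycles_adaptiveField hω hα dotProduct_blockProj hp
    (smul_inv_smul₀ four_ne_zero _).symm hresponse (contDiffAt_softmaxRemainder _)
    (dotProduct_softmaxRemainder_harmonic1 hp) hneg fun r s t =>
      augmentedSoftmax_smul_apply r s t).rescale (Nat.cast_pos.2 (NeZero.pos m))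
    fun μ y hy => hy.isCycle_softmaxField hcomm hα (by positivity)

theorem weightOp_eq_self [NeZero m] (hp : (W * Lam n m) *ᵥ p = (1 / (m : ℝ)) • p) :
    weightOp W p = p := by
  rw [mul_Lam_mulVec] at hp
  exact smul_right_injective _ (one_div_ne_zero (NeZero.ne (m : ℝ))) hp

theorem blockProj_sq_eq_zero_or_sum_pow_four_le {g : ℝ} (hp : blockMean n m p = 0)
    (hcase : m = 2 ∨ (m = 3 ∧ m * (1 + α) ^ 2 ≤ g) ∨
      (4 ≤ m ∧ m * (1 + α) ^ 2 ≤ g ∧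
        ∑ r, ∑ t, p (r, t) ^ 4 ≤ (3 / m) * ∑ r, (∑ t, p (r, t) ^ 2) ^ 2)) :
    blockProj n m (p ^ 2) = 0 ∨ m * (1 + α) ^ 2 ≤ g ∧
      ∑ r, ∑ t, p (r, t) ^ 4 ≤ (3 / m) * ∑ r, (∑ t, p (r, t) ^ 2) ^ 2 := by
  rcases hcase with rfl | ⟨rfl, hg⟩ | ⟨-, hg, hquartic⟩
  · exact .inl (blockProj_sq_eq_zero_of_two hp)
  · refine .inr ⟨hg, ?_⟩
    have hnonneg : 0 ≤ ∑ r, (∑ t, p (r, t) ^ 2) ^ 2 := Finset.sum_nonneg fun r _ => sq_nonneg _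
    simp only [sum_pow_four_of_three hp, ← Finset.sum_div]
    norm_num
    linarith
  · exact .inr ⟨hg, hquartic⟩

theorem BifurcatesToCycles.exists_periodic_orbit_in_ball {g μ₀ : ℝ}
    (h : BifurcatesToCycles (softmaxField W g α) μ₀) {ε : ℝ} (hε : 0 < ε) :
    ∃ δ > (0 : ℝ), ∀ μ ∈ Set.Ioo μ₀ (μ₀ + δ),
      ∃ (s a : ℝ → Fin n × Fin m → ℝ) (T : ℝ), 0 < T ∧
        (∀ t, HasDerivAt s (μ • W *ᵥ fbar n m (s t) - s t - a t) t) ∧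
        (∀ t, HasDerivAt a (g • fbar n m (s t) - α • a t) t) ∧
        (∀ t, s (t + T) = s t ∧ a (t + T) = a t) ∧
        (∃ t, s t ≠ s 0 ∨ a t ≠ a 0) ∧
        ∀ t, ∑ i, s t i ^ 2 + ∑ i, a t i ^ 2 < ε ^ 2 := by
  have hball : {u : (Fin n × Fin m → ℝ) × (Fin n × Fin m → ℝ) |
      ∑ i, u.1 i ^ 2 + ∑ i, u.2 i ^ 2 < ε ^ 2} ∈ nhds 0 :=
    (isOpen_lt (by fun_prop) continuous_const).mem_nhds (by simpa using pow_pos hε 2)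
  obtain ⟨δ, hδ, hcycle⟩ := h _ hball
  refine ⟨δ, hδ, fun μ hμ => ?_⟩
  obtain ⟨x, hx, hxε⟩ := hcycle μ hμ
  obtain ⟨T, hT, hperiodic⟩ := hx.exists_period
  obtain ⟨t, ht⟩ := hx.nonconstant
  exact ⟨fun t => (x t).1, fun t => (x t).2, T, hT, fun t => (hx.hasDerivAt t).fst,
    fun t => (hx.hasDerivAt t).snd, fun t => Prod.ext_iff.1 (hperiodic t),
    ⟨t, not_and_or.1 (mt Prod.ext_iff.2 ht)⟩, hxε⟩

theorem stmt13_general {g : ℝ} {lam : Fin n → Fin n → ℝ} (hα : 0 < α) (hW : W.IsSymm)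
    (hrow : ∀ (i k : Fin n) (j : Fin m), ∑ l : Fin m, W (i, j) (k, l) = lam i k)
    (hmax : ∀ x : ℝ, Module.End.HasEigenvalue (toLin' (W * Lam n m)) x → x ≤ 1 / m)
    (hsimple : Module.finrank ℝ (Module.End.eigenspace (toLin' (W * Lam n m)) (1 / m)) = 1)
    (hp : (W * Lam n m) *ᵥ p = (1 / (m : ℝ)) • p) (hpp : ∑ i, p i ^ 2 = 1) (hg : m * α ^ 2 < g)
    (hcase : blockProj n m (p ^ 2) = 0 ∨ α < 1 ∧ m * (1 + α) ^ 2 ≤ g ∧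
      ∑ r, ∑ t, p (r, t) ^ 4 ≤ (3 / m) * ∑ r, (∑ t, p (r, t) ^ 2) ^ 2) :
    BifurcatesToCycles (softmaxField W g α) (m * (1 + α)) := by
  have : NeZero m := ⟨by
    rintro rfl
    simp at hpp⟩
  have hm : (0 : ℝ) < m := Nat.cast_pos.2 (NeZero.pos m)
  have hunit : p ⬝ᵥ p = 1 := by simpa only [dotProduct, ← sq] using hpp
  have hcomm := mulVec_blockMean hW hrow
  obtain ⟨e, x, h⟩ := exists_isCriticalMode_weightOp hW hcomm hmax hsimple
    (weightOp_eq_self hp) hunit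
  have hα2 : α ^ 2 < g / m := (lt_div_iff₀' hm).2 hg
  have hω2 : √(g / m - α ^ 2) ^ 2 = g / m - α ^ 2 := Real.sq_sqrt (sub_pos.2 hα2).le
  have hcubic : cubicCoefficient p ≤ 0 := by
    refine hcase.elim (fun hb => (cubicCoefficient_neg ?_ hb).le)
      fun hb => cubicCoefficient_nonpos hb.2.2
    rintro rfl
    simp at hpp
  have hbif := h.bifurcatesToCycles_softmaxField hcomm hα (Real.sqrt_pos.2 (sub_pos.2 hα2)) hcubic
    (hcase.imp_right fun hb => ⟨hb.1, by
      rw [hω2]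
      linarith [(le_div_iff₀' hm).2 hb.2.1]⟩)
  rwa [hω2, sub_add_cancel, mul_div_cancel₀ _ hm.ne'] at hbif

end SoftmaxBifurcation

/-- Existence part of Theorem 3 (Hopf bifurcation): under Assumptions 1–3 on the
normalized weight matrix `W̄₀` (with `1/m` the largest, simple, eigenvalue of `W̄₀Λ`,
whose eigenspace is not contained in `span{ε_k ⊗ 𝟙_m}`, with unit eigenvector `p₁`),
if `ḡ_a > mα²` and one of the cases (a), (b), (c) holds, then for every `ε > 0` there is
`δ > 0` such that for every `μ₁ ∈ (m(1+α), m(1+α)+δ)` the system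
`s̄' = μ₁W̄₀ f̄(s̄) − s̄ − ā`, `ā' = ḡ_a f̄(s̄) − α ā` has a nonconstant periodic solution
whose orbit lies in the open ball of radius `ε` about the origin. -/
theorem stmt13 (n m : ℕ) (hn : 1 ≤ n) (hm : 2 ≤ m)
    (α ga : ℝ) (hα : α ∈ Set.Ioo (0 : ℝ) 1)
    (W0 : Matrix (Fin n × Fin m) (Fin n × Fin m) ℝ)
    (lam : Fin n → Fin n → ℝ)
    (hsymm : W0.IsSymm)
    (hdiag : ∀ (i : Fin n) (j l : Fin m), W0 (i, j) (i, l) = 0)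
    (hA2 : ∀ (i k : Fin n) (j : Fin m), ∑ l : Fin m, W0 (i, j) (k, l) = lam i k)
    (hA3 : ∀ i k : Fin n, lam i k = lam k i)
    (hev : Module.End.HasEigenvalue (Matrix.toLin' (W0 * Lam n m)) (1 / m))
    (hmaxev : ∀ x : ℝ,
      Module.End.HasEigenvalue (Matrix.toLin' (W0 * Lam n m)) x → x ≤ 1 / m)
    (hsimple :
      Module.finrank ℝ (Module.End.eigenspace (Matrix.toLin' (W0 * Lam n m)) (1 / m)) = 1)
    (hnotin : ¬ Module.End.eigenspace (Matrix.toLin' (W0 * Lam n m)) (1 / m) ≤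
      Submodule.span ℝ
        {v : Fin n × Fin m → ℝ | ∃ k : Fin n, v = fun p => if p.1 = k then 1 else 0})
    (p1 : Fin n × Fin m → ℝ)
    (hp1 : (W0 * Lam n m).mulVec p1 = (1 / (m : ℝ)) • p1)
    (hp1unit : ∑ p : Fin n × Fin m, p1 p ^ 2 = 1)
    (hga0 : (m : ℝ) * α ^ 2 < ga)
    (hcase : m = 2 ∨ (m = 3 ∧ (m : ℝ) * (1 + α) ^ 2 ≤ ga) ∨
      (4 ≤ m ∧ (m : ℝ) * (1 + α) ^ 2 ≤ ga ∧
        (∑ r : Fin n, ∑ t : Fin m, p1 (r, t) ^ 4) ≤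
          (3 / m) * ∑ r : Fin n, (∑ t : Fin m, p1 (r, t) ^ 2) ^ 2)) :
    ∀ ε > (0 : ℝ), ∃ δ > (0 : ℝ), ∀ μ1 : ℝ,
      μ1 ∈ Set.Ioo ((m : ℝ) * (1 + α)) ((m : ℝ) * (1 + α) + δ) →
      ∃ (sb ab : ℝ → (Fin n × Fin m → ℝ)) (T : ℝ), 0 < T ∧
        (∀ t : ℝ, HasDerivAt sb (μ1 • W0.mulVec (fbar n m (sb t)) - sb t - ab t) t) ∧
        (∀ t : ℝ, HasDerivAt ab (ga • fbar n m (sb t) - α • ab t) t) ∧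
        (∀ t : ℝ, sb (t + T) = sb t ∧ ab (t + T) = ab t) ∧
        (∃ t : ℝ, sb t ≠ sb 0 ∨ ab t ≠ ab 0) ∧
        (∀ t : ℝ, (∑ p : Fin n × Fin m, sb t p ^ 2) +
            (∑ p : Fin n × Fin m, ab t p ^ 2) < ε ^ 2) := by
  have : NeZero m := ⟨by lia⟩
  have hp : blockMean n m p1 = 0 := by
    rw [← weightOp_eq_self hp1, blockMean_weightOp (mulVec_blockMean hsymm hA2)]
  have hcase' := (blockProj_sq_eq_zero_or_sum_pow_four_le hp hcase).imp_right (And.intro hα.2)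
  exact fun ε hε => (stmt13_general hα.1 hsymm hA2 hmaxev hsimple hp1 hp1unit hga0
    hcase').exists_periodic_orbit_in_ball hε
end

section
/- Let W be a symmetric mn×mn real matrix with largest eigenvalue μ_max(W) < 2(1+α), let σ = 2(1+α) − μ_max(W) > 0, α ∈ (0,1), and suppose ḡ_a > 2α²(1+α)‖W‖²/σ², where ‖W‖ is the operator norm of W. Then the origin is a globally asymptotically stable equilibrium of system (7): it is Lyapunov stable, and every solution (s̄, ā) : [0, ∞) → ℝ^{mn} × ℝ^{mn} of system (7) satisfies (s̄(t), ā(t)) → (0, 0) as t → ∞. -/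
open scoped BigOperators
open Matrix

/-! `f̄` is the gradient of a function `Φ`, blockwise log-sum-exp minus mean, and satisfies the
sector inequality `2 ‖f̄(s)‖² ≤ ⟪s, f̄(s)⟫`: written as a sum over pairs of entries in a block, this
follows from the fact that the logarithmic mean of two softmax values is at most their arithmetic
mean, hence at most `1/2`.

For `0 < b < α` the function `V = ‖a‖²/2 - b⟪a, s⟫ + b(1 + α)‖s‖²/2 + ḡ_a (Φ(s) - Φ(0))` is
comparable to `‖s‖² + ‖a‖²`. Along solutions the terms in `⟪a, s⟫` and `⟪a, f̄(s)⟫` of its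
derivative cancel. Young's inequality absorbs those in `⟪a, W f̄(s)⟫` and `⟪s, W f̄(s)⟫` into
`-(α - b)‖a‖² - b(1 + α)‖s‖²` at the cost of a multiple of `‖W‖² ‖f̄(s)‖²`, while the sector
inequality and the eigenvalue bound make the remaining ones at most
`-ḡ_a (2(1 + b) - μ_max) ‖f̄(s)‖²`. The gain condition is what allows the second quantity to
dominate, with `b` near `max 0 (α - σ/4)`. Gronwall's inequality then gives exponential decay. -/

open Filter Topology Set
open scoped RealInnerProductSpace

section RealInequalities

lemma le_mul_exp_of_lyapunov {V V' N : ℝ → ℝ} {k₁ k₂ κ : ℝ} (hk₁ : 0 < k₁) (hk₂ : 0 < k₂)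
    (hκ : 0 ≤ κ) (hV : ∀ t, 0 ≤ t → HasDerivWithinAt V (V' t) (Ici 0) t)
    (hlower : ∀ t, 0 ≤ t → k₁ * N t ≤ V t) (hupper : ∀ t, 0 ≤ t → V t ≤ k₂ * N t)
    (hdecay : ∀ t, 0 ≤ t → V' t ≤ -κ * N t) {t : ℝ} (ht : 0 ≤ t) :
    N t ≤ k₂ / k₁ * N 0 * Real.exp (-(κ / k₂) * t) := by
  have hV' : ∀ τ, 0 ≤ τ → V' τ ≤ -(κ / k₂) * V τ + 0 := fun τ hτ => by
    have h : κ / k₂ * V τ ≤ κ / k₂ * (k₂ * N τ) :=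
      mul_le_mul_of_nonneg_left (hupper τ hτ) (by positivity)
    rw [← mul_assoc, div_mul_cancel₀ κ hk₂.ne'] at h
    linarith [hdecay τ hτ]
  have hgronwall : V t ≤ V 0 * Real.exp (-(κ / k₂) * t) := by
    simpa [gronwallBound_ε0] using le_gronwallBound_of_liminf_deriv_right_le (a := 0)
      (fun τ hτ => (hV τ hτ.1).continuousWithinAt.mono Icc_subset_Ici_self)
      (fun τ hτ _ hr => ((hV τ hτ.1).mono (Ici_subset_Ici.2 hτ.1)).liminf_right_slope_le hr)
      le_rfl (fun τ hτ => hV' τ hτ.1) t (right_mem_Icc.2 ht)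
  have hbound : k₁ * N t ≤ k₂ * N 0 * Real.exp (-(κ / k₂) * t) :=
    (hlower t ht).trans <| hgronwall.trans <|
      mul_le_mul_of_nonneg_right (hupper 0 le_rfl) (Real.exp_nonneg _)
  rw [← le_div_iff₀' hk₁] at hbound
  exact hbound.trans_eq (by ring)

lemma cross_weight_lt_of_sub_eq {α β g μ M b : ℝ} (hα : 0 < α) (hβ : 0 < β)
    (hμ : μ < β * (1 + α)) (hg : β * α ^ 2 * (1 + α) * M ^ 2 / (β * (1 + α) - μ) ^ 2 < g)
    (hbα : 2 * β * (α - b) = β * (1 + α) - μ) :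
    α * b * (1 + α - b) * M ^ 2 < 4 * g * (α - b) * (β * (1 + b) - μ) := by
  have hσ : 0 < β * (1 + α) - μ := sub_pos.2 hμ
  have hd : 0 < α - b := pos_of_mul_pos_right (hbα ▸ hσ) (by positivity)
  rw [← hbα, div_lt_iff₀ (by positivity)] at hg
  have hcoupling : b * (1 + α - b) ≤ α * (1 + α) := by
    linarith [mul_pos hd (by linarith : 0 < 1 + α), sq_nonneg b]
  refine lt_of_mul_lt_mul_left ?_ hβ.le
  calc β * (α * b * (1 + α - b) * M ^ 2)
      = β * α * M ^ 2 * (b * (1 + α - b)) := by ring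
    _ ≤ β * α * M ^ 2 * (α * (1 + α)) := by gcongr
    _ = β * α ^ 2 * (1 + α) * M ^ 2 := by ring
    _ < g * (2 * β * (α - b)) ^ 2 := hg
    _ = β * (4 * g * (α - b) * (2 * β * (α - b) - β * (α - b))) := by ring
    _ = β * (4 * g * (α - b) * (β * (1 + b) - μ)) := by rw [hbα]; ring

lemma exists_cross_weight {α β g μ M : ℝ} (hα : 0 < α) (hβ : 0 < β) (hμ : μ < β * (1 + α))
    (hg : β * α ^ 2 * (1 + α) * M ^ 2 / (β * (1 + α) - μ) ^ 2 < g) :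
    ∃ b ∈ Ioo 0 α, α * b * (1 + α - b) * M ^ 2 < 4 * g * (α - b) * (β * (1 + b) - μ) := by
  have hg₀ : 0 < g := lt_of_le_of_lt (by positivity) hg
  set σ := β * (1 + α) - μ
  have hσ₀ : 0 < σ := sub_pos.2 hμ
  obtain ⟨b₀, hb₀, hb₀α, hlt⟩ : ∃ b₀, 0 ≤ b₀ ∧ b₀ < α ∧
      α * b₀ * (1 + α - b₀) * M ^ 2 < 4 * g * (α - b₀) * (β * (1 + b₀) - μ) := by
    rcases le_or_gt (2 * β * α) σ with hle | hgt
    · refine ⟨0, le_rfl, hα, ?_⟩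
      have : 0 < β * (1 + 0) - μ := by nlinarith
      have : 0 < 4 * g * (α - 0) * (β * (1 + 0) - μ) := by
        rw [sub_zero]
        positivity
      linarith
    · -- This value of `b₀` maximises the right-hand side, a concave quadratic.
      refine ⟨α - σ / (2 * β), ?_, by linarith [div_pos hσ₀ (mul_pos two_pos hβ)], ?_⟩
      · rw [sub_nonneg, div_le_iff₀ (by positivity)]
        linarith
      · exact cross_weight_lt_of_sub_eq hα hβ hμ hg (by field_simp; ring)
  have hev : ∀ᶠ b in 𝓝 b₀,
      α * b * (1 + α - b) * M ^ 2 < 4 * g * (α - b) * (β * (1 + b) - μ) :=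
    ContinuousAt.eventually_lt (by fun_prop) (by fun_prop) hlt
  obtain ⟨b, hb, hbmem⟩ := ((hev.filter_mono nhdsWithin_le_nhds).and
    (Ioo_mem_nhdsGT hb₀α)).exists
  exact ⟨b, ⟨hb₀.trans_lt hbmem.1, hbmem.2⟩, hb⟩

end RealInequalities

section QuadraticInequalities

variable {E : Type*} [NormedAddCommGroup E] [InnerProductSpace ℝ E]

/-- Cayley–Hamilton for the symmetric matrix `A = !![p, q; q, r]`:
`tr A • A - det A • 1 = A ^ 2` is positive semidefinite. -/
lemma det_mul_norm_sq_add_le_trace_mul (p q r : ℝ) (x y : E) :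
    (p * r - q ^ 2) * (‖x‖ ^ 2 + ‖y‖ ^ 2) ≤
      (p + r) * (p * ‖x‖ ^ 2 + 2 * q * ⟪x, y⟫ + r * ‖y‖ ^ 2) := by
  have hx := sq_nonneg ‖p • x + q • y‖
  have hy := sq_nonneg ‖q • x + r • y‖
  simp only [norm_add_sq_real, norm_smul, inner_smul_left, inner_smul_right, mul_pow,
    Real.norm_eq_abs, sq_abs, conj_trivial] at hx hy
  linarith

lemma mul_inner_le_add_sq_div {ε : ℝ} (hε : 0 < ε) (c : ℝ) (x w : E) :
    c * ⟪x, w⟫ ≤ ε * ‖x‖ ^ 2 + c ^ 2 / (4 * ε) * ‖w‖ ^ 2 := by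
  have h := sq_nonneg ‖(2 * ε) • x - c • w‖
  simp only [norm_sub_sq_real, norm_smul, inner_smul_left, inner_smul_right, mul_pow,
    Real.norm_eq_abs, sq_abs, conj_trivial] at h
  have hsplit : ε * ‖x‖ ^ 2 + c ^ 2 / (4 * ε) * ‖w‖ ^ 2 - c * ⟪x, w⟫ =
      ((2 ^ 2 * ε ^ 2) * ‖x‖ ^ 2 - 2 * (c * (2 * ε * ⟪x, w⟫)) + c ^ 2 * ‖w‖ ^ 2) / (4 * ε) := by
    field_simp
    ring
  rw [← sub_nonneg, hsplit]
  exact div_nonneg h (by positivity)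

lemma neg_mul_inner_add_mul_inner_le {α b r : ℝ} (hb : b ∈ Ioo 0 α) (hr : 0 < r) (s a w : E) :
    -b * ⟪a, w⟫ + b * (1 + α) * ⟪s, w⟫ ≤
      r * ((α - b) * ‖a‖ ^ 2 + b * (1 + α) * ‖s‖ ^ 2) +
        α * b * (1 + α - b) / (4 * (α - b)) / r * ‖w‖ ^ 2 := by
  obtain ⟨hb₀, hbα⟩ := hb
  have hd : 0 < α - b := sub_pos.2 hbα
  have ha := mul_inner_le_add_sq_div (mul_pos hr hd) (-b) a w
  have hs := mul_inner_le_add_sq_div (mul_pos hr (mul_pos hb₀ (by linarith : 0 < 1 + α)))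
    (b * (1 + α)) s w
  have hcoeff : (-b) ^ 2 / (4 * (r * (α - b))) + (b * (1 + α)) ^ 2 / (4 * (r * (b * (1 + α)))) =
      α * b * (1 + α - b) / (4 * (α - b)) / r := by
    field_simp
    ring
  rw [← hcoeff]
  linarith

lemma exists_dissipation_rate {α β g μ M b : ℝ} (hb : b ∈ Ioo 0 α) (hg : 0 < g)
    (hweight : α * b * (1 + α - b) * M ^ 2 < 4 * g * (α - b) * (β * (1 + b) - μ)) :
    ∃ κ > 0, ∀ s a y w : E, β * ‖y‖ ^ 2 ≤ ⟪s, y⟫ → ⟪y, w⟫ ≤ μ * ‖y‖ ^ 2 → ‖w‖ ≤ M * ‖y‖ →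
      -(α - b) * ‖a‖ ^ 2 - b * (1 + α) * ‖s‖ ^ 2 - b * ⟪a, w⟫ + b * (1 + α) * ⟪s, w⟫ +
        g * (⟪y, w⟫ - (1 + b) * ⟪s, y⟫) ≤ -κ * (‖s‖ ^ 2 + ‖a‖ ^ 2) := by
  have hα : 0 < α := hb.1.trans hb.2
  have hd : 0 < α - b := sub_pos.2 hb.2
  have hC : 0 < b * (1 + α) := mul_pos hb.1 (by linarith)
  set T := α * b * (1 + α - b) / (4 * (α - b)) with hT
  set G := g * (β * (1 + b) - μ)
  have hT₀ : 0 ≤ T := div_nonneg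
    (mul_nonneg (mul_pos hα hb.1).le (by linarith)) (by linarith)
  have hTG : T * M ^ 2 < G := by
    rw [hT, div_mul_eq_mul_div, div_lt_iff₀ (by positivity)]
    linarith
  have hG₀ : 0 < G := lt_of_le_of_lt (by positivity) hTG
  obtain ⟨r, hr, hr₁⟩ := exists_between ((div_lt_one hG₀).2 hTG)
  have hr₀ : 0 < r := lt_of_le_of_lt (by positivity) hr
  refine ⟨(1 - r) * min (α - b) (b * (1 + α)), mul_pos (sub_pos.2 hr₁) (lt_min hd hC),
    fun s a y w hs hy hw => ?_⟩
  have hcoupling := neg_mul_inner_add_mul_inner_le hb hr₀ s a w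
  have hinput : T / r * ‖w‖ ^ 2 ≤ G * ‖y‖ ^ 2 := calc
    T / r * ‖w‖ ^ 2 ≤ T / r * (M * ‖y‖) ^ 2 := by gcongr
    _ = T * M ^ 2 / r * ‖y‖ ^ 2 := by ring
    _ ≤ G * ‖y‖ ^ 2 := by
      gcongr
      exact (div_le_comm₀ hG₀ hr₀).1 hr.le
  have houtput : g * (⟪y, w⟫ - (1 + b) * ⟪s, y⟫) ≤ -G * ‖y‖ ^ 2 := by
    have h := mul_le_mul_of_nonneg_left hs (by linarith [hb.1] : 0 ≤ 1 + b)
    have := mul_le_mul_of_nonneg_left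
      (by linarith : ⟪y, w⟫ - (1 + b) * ⟪s, y⟫ ≤ -(β * (1 + b) - μ) * ‖y‖ ^ 2) hg.le
    linarith
  have hmin : min (α - b) (b * (1 + α)) * (‖s‖ ^ 2 + ‖a‖ ^ 2) ≤
      (α - b) * ‖a‖ ^ 2 + b * (1 + α) * ‖s‖ ^ 2 := by
    have hs' := mul_le_mul_of_nonneg_right (min_le_right (α - b) (b * (1 + α))) (sq_nonneg ‖s‖)
    have ha' := mul_le_mul_of_nonneg_right (min_le_left (α - b) (b * (1 + α))) (sq_nonneg ‖a‖)
    linarith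
  linarith [mul_le_mul_of_nonneg_left hmin (sub_pos.2 hr₁).le]

end QuadraticInequalities

section SectorPotential

variable {E : Type*} [NormedAddCommGroup E] [InnerProductSpace ℝ E]
  {Φ : E → ℝ} {φ : E → E} {β : ℝ}

lemma norm_le_div_of_mul_norm_sq_le_inner (hβ : 0 < β) {s y : E} (h : β * ‖y‖ ^ 2 ≤ ⟪s, y⟫) :
    ‖y‖ ≤ ‖s‖ / β := by
  rw [le_div_iff₀' hβ]
  rcases (norm_nonneg y).eq_or_lt with hy | hy
  · simp [← hy]
  · refine le_of_mul_le_mul_right ?_ hy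
    linarith [real_inner_le_norm s y]

lemma exists_sub_eq_inner_smul (hΦ : ∀ s, HasFDerivAt Φ (innerSL ℝ (φ s)) s) (s : E) :
    ∃ t ∈ Ioo (0 : ℝ) 1, Φ s - Φ 0 = ⟪φ (t • s), s⟫ := by
  have hderiv : ∀ t : ℝ, HasDerivAt (fun t : ℝ => Φ (t • s)) ⟪φ (t • s), s⟫ t := fun t => by
    simpa [Function.comp_def] using
      (hΦ (t • s)).comp_hasDerivAt t ((hasDerivAt_id t).smul_const s)
  obtain ⟨t, ht, h⟩ := exists_hasDerivAt_eq_slope _ _ zero_lt_one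
    (fun t _ => (hderiv t).continuousAt.continuousWithinAt) (fun t _ => hderiv t)
  exact ⟨t, ht, by simpa using h.symm⟩

lemma potential_sub_nonneg (hβ : 0 ≤ β) (hΦ : ∀ s, HasFDerivAt Φ (innerSL ℝ (φ s)) s)
    (hφ : ∀ s, β * ‖φ s‖ ^ 2 ≤ ⟪s, φ s⟫) (s : E) : 0 ≤ Φ s - Φ 0 := by
  obtain ⟨t, ht, h⟩ := exists_sub_eq_inner_smul hΦ s
  have hsector : 0 ≤ t * ⟪s, φ (t • s)⟫ := by
    rw [← real_inner_smul_left]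
    exact le_trans (by positivity) (hφ (t • s))
  rw [h, real_inner_comm]
  exact nonneg_of_mul_nonneg_right hsector ht.1

lemma potential_sub_le (hβ : 0 < β) (hΦ : ∀ s, HasFDerivAt Φ (innerSL ℝ (φ s)) s)
    (hφ : ∀ s, β * ‖φ s‖ ^ 2 ≤ ⟪s, φ s⟫) (s : E) : Φ s - Φ 0 ≤ ‖s‖ ^ 2 / β := by
  obtain ⟨t, ht, h⟩ := exists_sub_eq_inner_smul hΦ s
  calc Φ s - Φ 0 = ⟪φ (t • s), s⟫ := h
    _ ≤ ‖φ (t • s)‖ * ‖s‖ := real_inner_le_norm _ _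
    _ ≤ ‖t • s‖ / β * ‖s‖ := by
      gcongr
      exact norm_le_div_of_mul_norm_sq_le_inner hβ (hφ _)
    _ ≤ ‖s‖ / β * ‖s‖ := by
      gcongr
      rw [norm_smul, Real.norm_of_nonneg ht.1.le]
      exact mul_le_of_le_one_left (norm_nonneg s) ht.2.le
    _ = ‖s‖ ^ 2 / β := by ring

end SectorPotential

section AdaptationSystem

variable {E : Type*} [NormedAddCommGroup E] [InnerProductSpace ℝ E]

/-- `(s, a)` solves on `[0, ∞)` the analogue of system (7) in an inner product space, with a
continuous linear map `W` as interaction and an arbitrary activation function `φ`. -/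
structure IsAdaptationSolution (W : E →L[ℝ] E) (φ : E → E) (α g : ℝ) (s a : ℝ → E) : Prop where
  hasDerivWithinAt_state :
    ∀ t, 0 ≤ t → HasDerivWithinAt s (W (φ (s t)) - s t - a t) (Ici 0) t
  hasDerivWithinAt_adaptation :
    ∀ t, 0 ≤ t → HasDerivWithinAt a (g • φ (s t) - α • a t) (Ici 0) t

/-- Global exponential stability of the origin: the squared Euclidean norm of `(s, a)` decays
exponentially along all solutions, at a uniform rate. -/
def AdaptationExpStable (W : E →L[ℝ] E) (φ : E → E) (α g : ℝ) : Prop :=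
  ∃ K > 0, ∃ c > 0, ∀ s a : ℝ → E, IsAdaptationSolution W φ α g s a → ∀ t, 0 ≤ t →
    ‖s t‖ ^ 2 + ‖a t‖ ^ 2 ≤ K * (‖s 0‖ ^ 2 + ‖a 0‖ ^ 2) * Real.exp (-c * t)

/-- The Lyapunov function of the adaptation system. `Φ` is a potential of the activation function
and `b` the weight of the cross term; the coefficient of `‖s‖ ^ 2` makes the terms in `⟪a, s⟫`
cancel in the derivative, and the factor `g` those in `⟪a, φ s⟫`. -/
noncomputable def adaptationLyapunov (Φ : E → ℝ) (α g b : ℝ) (s a : E) : ℝ :=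
  1 / 2 * ‖a‖ ^ 2 - b * ⟪a, s⟫ + b * (1 + α) / 2 * ‖s‖ ^ 2 + g * (Φ s - Φ 0)

variable {W : E →L[ℝ] E} {Φ : E → ℝ} {φ : E → E} {α β g b : ℝ}

lemma IsAdaptationSolution.hasDerivWithinAt_lyapunov {s a : ℝ → E}
    (h : IsAdaptationSolution W φ α g s a)
    (hΦ : ∀ s, HasFDerivAt Φ (innerSL ℝ (φ s)) s) (b : ℝ) {t : ℝ} (ht : 0 ≤ t) :
    HasDerivWithinAt (fun t => adaptationLyapunov Φ α g b (s t) (a t))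
      (-(α - b) * ‖a t‖ ^ 2 - b * (1 + α) * ‖s t‖ ^ 2 - b * ⟪a t, W (φ (s t))⟫ +
        b * (1 + α) * ⟪s t, W (φ (s t))⟫ +
        g * (⟪φ (s t), W (φ (s t))⟫ - (1 + b) * ⟪s t, φ (s t)⟫)) (Ici 0) t := by
  have hs := h.hasDerivWithinAt_state t ht
  have ha := h.hasDerivWithinAt_adaptation t ht
  have hpot := (((hΦ (s t)).comp_hasDerivWithinAt t hs).sub_const (Φ 0)).const_mul g
  refine ((((ha.norm_sq.const_mul (1 / 2)).sub ((ha.inner ℝ hs).const_mul b)).add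
    (hs.norm_sq.const_mul (b * (1 + α) / 2))).add hpot).congr_deriv ?_
  simp only [innerSL_apply_apply, inner_sub_left, inner_sub_right, inner_smul_left,
    inner_smul_right, real_inner_self_eq_norm_sq, conj_trivial]
  rw [real_inner_comm (φ (s t)) (s t), real_inner_comm (φ (s t)) (a t),
    real_inner_comm (a t) (s t)]
  ring

lemma mul_norm_sq_le_adaptationLyapunov (hb : b ∈ Ioo 0 α) (hg : 0 ≤ g) {s : E}
    (hΦ : 0 ≤ Φ s - Φ 0) (a : E) :
    b * (1 + α - b) / (2 * (1 + b * (1 + α))) * (‖s‖ ^ 2 + ‖a‖ ^ 2) ≤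
      adaptationLyapunov Φ α g b s a := by
  have hC : 0 < b * (1 + α) := mul_pos hb.1 (by linarith [hb.1, hb.2])
  have hform := det_mul_norm_sq_add_le_trace_mul (1 / 2) (-b / 2) (b * (1 + α) / 2) a s
  have hquad : b * (1 + α - b) / (2 * (1 + b * (1 + α))) * (‖s‖ ^ 2 + ‖a‖ ^ 2) ≤
      1 / 2 * ‖a‖ ^ 2 - b * ⟪a, s⟫ + b * (1 + α) / 2 * ‖s‖ ^ 2 := by
    rw [div_mul_eq_mul_div, div_le_iff₀ (by positivity)]
    linarith
  exact hquad.trans (le_add_of_nonneg_right (mul_nonneg hg hΦ))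

lemma adaptationLyapunov_le (hb : b ∈ Ioo 0 α) (hβ : 0 < β) (hg : 0 ≤ g) {s : E}
    (hΦ : Φ s - Φ 0 ≤ ‖s‖ ^ 2 / β) (a : E) :
    adaptationLyapunov Φ α g b s a ≤
      ((1 + b + b * (1 + α)) / 2 + g / β) * (‖s‖ ^ 2 + ‖a‖ ^ 2) := by
  have hC : 0 < b * (1 + α) := mul_pos hb.1 (by linarith [hb.1, hb.2])
  have hcross := mul_nonneg hb.1.le (sq_nonneg ‖a + s‖)
  rw [norm_add_sq_real] at hcross
  have hpot : g * (Φ s - Φ 0) ≤ g / β * ‖s‖ ^ 2 :=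
    (mul_le_mul_of_nonneg_left hΦ hg).trans_eq (by ring)
  have : 0 ≤ g / β * ‖a‖ ^ 2 := by positivity
  have : 0 ≤ b * (1 + α) * ‖a‖ ^ 2 := by positivity
  rw [adaptationLyapunov]
  linarith [sq_nonneg ‖s‖]

theorem stmt14_general {μ : ℝ} (hΦ : ∀ s, HasFDerivAt Φ (innerSL ℝ (φ s)) s)
    (hβ : 0 < β) (hφ : ∀ s, β * ‖φ s‖ ^ 2 ≤ ⟪s, φ s⟫) (hW : ∀ y, ⟪y, W y⟫ ≤ μ * ‖y‖ ^ 2)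
    (hα : 0 < α) (hμ : μ < β * (1 + α))
    (hg : β * α ^ 2 * (1 + α) * ‖W‖ ^ 2 / (β * (1 + α) - μ) ^ 2 < g) :
    AdaptationExpStable W φ α g := by
  have hg₀ : 0 < g := lt_of_le_of_lt (by positivity) hg
  obtain ⟨b, hb, hweight⟩ := exists_cross_weight hα hβ hμ hg
  obtain ⟨κ, hκ, hdissip⟩ := exists_dissipation_rate (E := E) hb hg₀ hweight
  have hb₀ : 0 < b := hb.1
  have hαb : 0 < 1 + α - b := by linarith [hb.2]
  have hk₁ : 0 < b * (1 + α - b) / (2 * (1 + b * (1 + α))) := by positivity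
  have hk₂ : 0 < (1 + b + b * (1 + α)) / 2 + g / β := by positivity
  exact ⟨_, div_pos hk₂ hk₁, _, div_pos hκ hk₂, fun s a h t ht => le_mul_exp_of_lyapunov
    (N := fun t => ‖s t‖ ^ 2 + ‖a t‖ ^ 2) hk₁ hk₂ hκ.le
    (fun t ht => h.hasDerivWithinAt_lyapunov hΦ b ht)
    (fun t _ => mul_norm_sq_le_adaptationLyapunov hb hg₀.le
      (potential_sub_nonneg hβ.le hΦ hφ (s t)) (a t))
    (fun t _ => adaptationLyapunov_le hb hβ hg₀.le (potential_sub_le hβ hΦ hφ (s t)) (a t))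
    (fun t _ => hdissip _ _ _ _ (hφ (s t)) (hW _) (W.le_opNorm _)) ht⟩

lemma AdaptationExpStable.exists_forall_sqrt_lt (h : AdaptationExpStable W φ α g) {ε : ℝ}
    (hε : 0 < ε) :
    ∃ δ > 0, ∀ s a, IsAdaptationSolution W φ α g s a → √(‖s 0‖ ^ 2 + ‖a 0‖ ^ 2) < δ →
      ∀ t, 0 ≤ t → √(‖s t‖ ^ 2 + ‖a t‖ ^ 2) < ε := by
  obtain ⟨K, hK, c, hc, hbound⟩ := h
  refine ⟨ε / √K, by positivity, fun s a hsa h₀ t ht => ?_⟩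
  have hexp : Real.exp (-c * t) ≤ 1 := Real.exp_le_one_iff.2 (by nlinarith)
  calc √(‖s t‖ ^ 2 + ‖a t‖ ^ 2)
      ≤ √(K * (‖s 0‖ ^ 2 + ‖a 0‖ ^ 2)) := Real.sqrt_le_sqrt <|
        (hbound s a hsa t ht).trans (mul_le_of_le_one_right (by positivity) hexp)
    _ = √K * √(‖s 0‖ ^ 2 + ‖a 0‖ ^ 2) := Real.sqrt_mul hK.le _
    _ < ε := by rwa [← lt_div_iff₀' (by positivity)]

lemma AdaptationExpStable.tendsto_zero (h : AdaptationExpStable W φ α g) {s a : ℝ → E}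
    (hsa : IsAdaptationSolution W φ α g s a) :
    Tendsto (fun t => (s t, a t)) atTop (𝓝 (0, 0)) := by
  obtain ⟨K, -, c, hc, hbound⟩ := h
  have hexp : Tendsto (fun t => Real.exp (-c * t)) atTop (𝓝 0) :=
    Real.tendsto_exp_atBot.comp (tendsto_id.const_mul_atTop_of_neg (neg_lt_zero.2 hc))
  have hsum : Tendsto (fun t => ‖s t‖ ^ 2 + ‖a t‖ ^ 2) atTop (𝓝 0) := by
    refine squeeze_zero' (.of_forall fun _ => by positivity)
      ((eventually_ge_atTop 0).mono (hbound s a hsa)) ?_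
    simpa using hexp.const_mul (K * (‖s 0‖ ^ 2 + ‖a 0‖ ^ 2))
  have of_norm_sq_le {x : ℝ → E} (hx : ∀ t, ‖x t‖ ^ 2 ≤ ‖s t‖ ^ 2 + ‖a t‖ ^ 2) :
      Tendsto x atTop (𝓝 0) :=
    squeeze_zero_norm (fun t => Real.le_sqrt_of_sq_le (hx t)) (by simpa using hsum.sqrt)
  exact (of_norm_sq_le fun t => le_add_of_nonneg_right (sq_nonneg _)).prodMk_nhds
    (of_norm_sq_le fun t => le_add_of_nonneg_left (sq_nonneg _))

end AdaptationSystem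

section Coordinates

variable {ι : Type*} [Fintype ι] [DecidableEq ι] {W : Matrix ι ι ℝ} {f : (ι → ℝ) → ι → ℝ}
  {α g : ℝ}

lemma isAdaptationSolution_toLp {s a : ℝ → ι → ℝ}
    (hs : ∀ t, 0 ≤ t → HasDerivAt s (W *ᵥ f (s t) - s t - a t) t)
    (ha : ∀ t, 0 ≤ t → HasDerivAt a (g • f (s t) - α • a t) t) :
    IsAdaptationSolution (toEuclideanCLM (𝕜 := ℝ) W) (fun x => WithLp.toLp 2 (f x.ofLp)) α g
      (fun t => WithLp.toLp 2 (s t)) (fun t => WithLp.toLp 2 (a t)) where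
  hasDerivWithinAt_state t ht := by
    simpa [Function.comp_def] using
      ((PiLp.hasFDerivAt_toLp 2 (s t)).comp_hasDerivAt t (hs t ht)).hasDerivWithinAt
  hasDerivWithinAt_adaptation t ht := by
    simpa [Function.comp_def] using
      ((PiLp.hasFDerivAt_toLp 2 (a t)).comp_hasDerivAt t (ha t ht)).hasDerivWithinAt

lemma AdaptationExpStable.globallyAsymptoticallyStable
    (h : AdaptationExpStable (toEuclideanCLM (𝕜 := ℝ) W)
      (fun x => WithLp.toLp 2 (f x.ofLp)) α g) :
    (∀ ε > (0 : ℝ), ∃ δ > (0 : ℝ), ∀ s a : ℝ → ι → ℝ,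
      (∀ t, 0 ≤ t → HasDerivAt s (W *ᵥ f (s t) - s t - a t) t) →
      (∀ t, 0 ≤ t → HasDerivAt a (g • f (s t) - α • a t) t) →
      √(∑ p, s 0 p ^ 2 + ∑ p, a 0 p ^ 2) < δ →
      ∀ t, 0 ≤ t → √(∑ p, s t p ^ 2 + ∑ p, a t p ^ 2) < ε) ∧
    ∀ s a : ℝ → ι → ℝ,
      (∀ t, 0 ≤ t → HasDerivAt s (W *ᵥ f (s t) - s t - a t) t) →
      (∀ t, 0 ≤ t → HasDerivAt a (g • f (s t) - α • a t) t) →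
      Tendsto (fun t => (s t, a t)) atTop (𝓝 (0, 0)) := by
  refine ⟨fun ε hε => ?_, fun s a hs ha => ?_⟩
  · obtain ⟨δ, hδ, hstable⟩ := h.exists_forall_sqrt_lt hε
    simp only [EuclideanSpace.real_norm_sq_eq] at hstable
    exact ⟨δ, hδ, fun s a hs ha => hstable _ _ (isAdaptationSolution_toLp hs ha)⟩
  · have hcont := PiLp.continuous_ofLp 2 (fun _ : ι => ℝ)
    exact ((hcont.prodMap hcont).tendsto _).comp
      (h.tendsto_zero (isAdaptationSolution_toLp hs ha))

end Coordinates

section Eigenvalues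

lemma inner_apply_le_of_hasEigenvalue_le {E : Type*} [NormedAddCommGroup E]
    [InnerProductSpace ℝ E] [FiniteDimensional ℝ E] {T : E →ₗ[ℝ] E} (hT : T.IsSymmetric) {μ : ℝ}
    (hμ : ∀ x, Module.End.HasEigenvalue T x → x ≤ μ) (y : E) : ⟪y, T y⟫ ≤ μ * ‖y‖ ^ 2 := by
  let B := hT.eigenvectorBasis rfl
  calc ⟪y, T y⟫ = ∑ i, hT.eigenvalues rfl i * ‖⟪B i, y⟫‖ ^ 2 := by
        rw [← B.sum_inner_mul_inner]
        refine Finset.sum_congr rfl fun i _ => ?_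
        rw [← hT (B i) y, hT.apply_eigenvectorBasis, real_inner_smul_left, real_inner_comm y,
          Real.norm_eq_abs, sq_abs, RCLike.ofReal_real_eq_id, id_eq]
        ring
    _ ≤ ∑ i, μ * ‖⟪B i, y⟫‖ ^ 2 := by
        gcongr with i
        exact hμ _ (hT.hasEigenvalue_eigenvalues rfl i)
    _ = μ * ‖y‖ ^ 2 := by rw [← Finset.mul_sum, B.sum_sq_norm_inner_right]

lemma inner_toEuclideanCLM_le {ι : Type*} [Fintype ι] [DecidableEq ι] {W : Matrix ι ι ℝ}
    (hW : W.IsSymm) {μ : ℝ} (hμ : ∀ x, Module.End.HasEigenvalue (toLin' W) x → x ≤ μ)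
    (y : EuclideanSpace ℝ ι) : ⟪y, toEuclideanCLM (𝕜 := ℝ) W y⟫ ≤ μ * ‖y‖ ^ 2 := by
  have hsymm := isSymmetric_toEuclideanLin_iff.2 (isHermitian_iff_isSymm.2 hW)
  refine inner_apply_le_of_hasEigenvalue_le hsymm (fun x hx => hμ x ?_) y
  rw [Module.End.hasEigenvalue_iff_mem_spectrum] at hx ⊢
  rwa [spectrum_toLin', ← spectrum_toLpLin 2]

end Eigenvalues

section ProbabilityVector

variable {ι : Type*} [Fintype ι]

lemma two_mul_sq_sub_le_add_mul_sub_mul_log_sub_log {u v : ℝ} (hu : 0 < u) (hv : 0 < v) :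
    2 * (u - v) ^ 2 ≤ (u + v) * ((u - v) * (Real.log u - Real.log v)) := by
  wlog h : v ≤ u generalizing u v
  · linarith [this hv hu (le_of_not_ge h)]
  have hlog := Real.le_log_one_add_of_nonneg (x := u / v - 1)
    (by rwa [sub_nonneg, one_le_div hv])
  rw [add_sub_cancel, Real.log_div hu.ne' hv.ne',
    show 2 * (u / v - 1) / (u / v - 1 + 2) = 2 * (u - v) / (u + v) by
      rw [show u / v - 1 + 2 = (u + v) / v by field_simp; ring]
      field_simp,
    div_le_iff₀ (by positivity)] at hlog
  linarith [mul_le_mul_of_nonneg_left hlog (sub_nonneg.2 h)]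

lemma sum_sum_sub_mul_sub_of_sum_eq_zero {u : ι → ℝ} (hu : ∑ i, u i = 0) (v : ι → ℝ) :
    ∑ i, ∑ j, (u i - u j) * (v i - v j) = 2 * Fintype.card ι * ∑ i, u i * v i := by
  simp only [sub_mul, mul_sub, Finset.sum_sub_distrib, ← Finset.mul_sum, ← Finset.sum_mul, hu,
    Finset.sum_const, Finset.card_univ, nsmul_eq_mul, mul_left_comm _ (Fintype.card ι : ℝ),
    mul_assoc]
  ring

lemma two_mul_sq_sub_le_sub_mul_log_sub_log {u : ι → ℝ} (hu : ∀ i, 0 < u i)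
    (hsum : ∑ i, u i = 1) (i j : ι) :
    2 * (u i - u j) ^ 2 ≤ (u i - u j) * (Real.log (u i) - Real.log (u j)) := by
  rcases eq_or_ne i j with rfl | hij
  · simp
  have hle : u i + u j ≤ 1 := by
    classical
    rw [← Finset.sum_pair hij, ← hsum]
    exact Finset.sum_le_sum_of_subset_of_nonneg (Finset.subset_univ _) fun l _ _ => (hu l).le
  have h := two_mul_sq_sub_le_add_mul_sub_mul_log_sub_log (hu i) (hu j)
  have hnonneg := nonneg_of_mul_nonneg_right ((by positivity : (0 : ℝ) ≤ _).trans h)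
    (add_pos (hu i) (hu j))
  exact h.trans (mul_le_of_le_one_left hnonneg hle)

lemma two_mul_sum_sq_sub_inv_card_le {u : ι → ℝ} (hu : ∀ i, 0 < u i) (hsum : ∑ i, u i = 1) :
    2 * ∑ i, (u i - 1 / Fintype.card ι) ^ 2 ≤
      ∑ i, (u i - 1 / Fintype.card ι) * Real.log (u i) := by
  have hcard : (0 : ℝ) < Fintype.card ι := by
    rcases isEmpty_or_nonempty ι with hι | hι
    · simp at hsum
    · exact_mod_cast Fintype.card_pos
  have hcentered : ∑ i, (u i - 1 / Fintype.card ι) = 0 := by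
    simp [hsum, hcard.ne']
  have hpair : ∀ i j, 2 * (u i - u j) ^ 2 ≤ (u i - u j) * (Real.log (u i) - Real.log (u j)) :=
    two_mul_sq_sub_le_sub_mul_log_sub_log hu hsum
  have hsq := sum_sum_sub_mul_sub_of_sum_eq_zero hcentered fun i => u i - 1 / Fintype.card ι
  have hlog := sum_sum_sub_mul_sub_of_sum_eq_zero hcentered fun i => Real.log (u i)
  simp only [sub_sub_sub_cancel_right, ← sq] at hsq hlog
  refine le_of_mul_le_mul_left ?_ (mul_pos two_pos hcard)
  rw [mul_left_comm, ← hsq, ← hlog]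
  simp only [Finset.mul_sum]
  exact Finset.sum_le_sum fun i _ => Finset.sum_le_sum fun j _ => hpair i j

end ProbabilityVector

section Softmax

variable {n m : ℕ} [NeZero m]

lemma sum_exp_pos {ι : Type*} [Fintype ι] [Nonempty ι] (x : ι → ℝ) : 0 < ∑ l, Real.exp (x l) :=
  Finset.sum_pos (fun _ _ => Real.exp_pos _) Finset.univ_nonempty

lemma sum_softmax_block (s : Fin n × Fin m → ℝ) (i : Fin n) : ∑ l, softmax n m s (i, l) = 1 := by
  simp only [softmax]
  rw [← Finset.sum_div, div_self (sum_exp_pos _).ne']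

lemma sum_fbar_block (s : Fin n × Fin m → ℝ) (i : Fin n) : ∑ l, fbar n m s (i, l) = 0 := by
  simp [fbar, sum_softmax_block]

lemma two_mul_sum_fbar_block_sq_le (s : Fin n × Fin m → ℝ) (i : Fin n) :
    2 * ∑ l, fbar n m s (i, l) ^ 2 ≤ ∑ l, s (i, l) * fbar n m s (i, l) := by
  have hZ := sum_exp_pos fun l => s (i, l)
  have hlog : ∀ l, Real.log (softmax n m s (i, l)) =
      s (i, l) - Real.log (∑ l, Real.exp (s (i, l))) := fun l => by
    rw [softmax, Real.log_div (Real.exp_pos _).ne' hZ.ne', Real.log_exp]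
  have h := two_mul_sum_sq_sub_inv_card_le (u := fun l => softmax n m s (i, l))
    (fun l => div_pos (Real.exp_pos _) hZ) (sum_softmax_block s i)
  simp only [Fintype.card_fin] at h
  change 2 * ∑ l, fbar n m s (i, l) ^ 2 ≤
    ∑ l, fbar n m s (i, l) * Real.log (softmax n m s (i, l)) at h
  simp only [hlog, mul_sub, Finset.sum_sub_distrib, ← Finset.sum_mul, sum_fbar_block, zero_mul,
    sub_zero] at h
  simpa only [mul_comm] using h

/-- The function with gradient `f̄`: blockwise log-sum-exp minus mean. -/
noncomputable def fbarPotential (n m : ℕ) (s : EuclideanSpace ℝ (Fin n × Fin m)) : ℝ :=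
  ∑ i, (Real.log (∑ l, Real.exp (s (i, l))) - (∑ l, s (i, l)) / m)

lemma hasFDerivAt_fbarPotential (s : EuclideanSpace ℝ (Fin n × Fin m)) :
    HasFDerivAt (fbarPotential n m) (innerSL ℝ (WithLp.toLp 2 (fbar n m s.ofLp))) s := by
  have hcoord : ∀ p, HasFDerivAt (fun s : EuclideanSpace ℝ (Fin n × Fin m) => s p)
      (EuclideanSpace.proj (𝕜 := ℝ) p) s := fun p => PiLp.hasFDerivAt_apply 2 s p
  refine (HasFDerivAt.fun_sum fun i _ =>
    ((HasFDerivAt.fun_sum fun l _ => (hcoord (i, l)).exp).log (sum_exp_pos _).ne').sub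
      ((HasFDerivAt.fun_sum fun l _ => hcoord (i, l)).mul_const (m : ℝ)⁻¹)).congr_fderiv ?_
  ext v
  simp [PiLp.inner_apply, Fintype.sum_prod_type, fbar, softmax, Finset.mul_sum,
    Finset.sum_sub_distrib, mul_sub, div_eq_mul_inv, mul_comm, mul_left_comm, mul_assoc]

lemma two_mul_norm_sq_fbar_le (s : EuclideanSpace ℝ (Fin n × Fin m)) :
    2 * ‖WithLp.toLp 2 (fbar n m s.ofLp)‖ ^ 2 ≤ ⟪s, WithLp.toLp 2 (fbar n m s.ofLp)⟫ := by
  rw [EuclideanSpace.real_norm_sq_eq, PiLp.inner_apply, Fintype.sum_prod_type,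
    Fintype.sum_prod_type, Finset.mul_sum]
  refine Finset.sum_le_sum fun i _ => ?_
  simpa only [Real.inner_apply] using two_mul_sum_fbar_block_sq_le s.ofLp i

end Softmax

/-- Proposition 2: if `W` is symmetric, `μ_max(W) < 2(1+α)`, `σ = 2(1+α) − μ_max(W)` and
`ḡ_a > 2α²(1+α)‖W‖²/σ²` (with `‖W‖` the operator norm of `W`), then the origin is a
globally asymptotically stable equilibrium of system (7): it is Lyapunov stable, and
every solution on `[0, ∞)` converges to the origin. -/
theorem stmt14 (n m : ℕ) (hn : 1 ≤ n) (hm : 2 ≤ m)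
    (W : Matrix (Fin n × Fin m) (Fin n × Fin m) ℝ) (hW : W.IsSymm)
    (μmax : ℝ)
    (hev : Module.End.HasEigenvalue (Matrix.toLin' W) μmax)
    (hmaxev : ∀ x : ℝ, Module.End.HasEigenvalue (Matrix.toLin' W) x → x ≤ μmax)
    (α ga : ℝ) (hα : α ∈ Set.Ioo (0 : ℝ) 1) (hga0 : 0 < ga)
    (hμ : μmax < 2 * (1 + α))
    (hga : 2 * α ^ 2 * (1 + α) * ‖Matrix.toEuclideanCLM (𝕜 := ℝ) W‖ ^ 2 /
        (2 * (1 + α) - μmax) ^ 2 < ga) :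
    (∀ ε > (0 : ℝ), ∃ δ > (0 : ℝ), ∀ sb ab : ℝ → (Fin n × Fin m → ℝ),
      (∀ t : ℝ, 0 ≤ t → HasDerivAt sb (W.mulVec (fbar n m (sb t)) - sb t - ab t) t) →
      (∀ t : ℝ, 0 ≤ t → HasDerivAt ab (ga • fbar n m (sb t) - α • ab t) t) →
      Real.sqrt ((∑ p : Fin n × Fin m, sb 0 p ^ 2) + ∑ p : Fin n × Fin m, ab 0 p ^ 2) < δ →
      ∀ t : ℝ, 0 ≤ t →
        Real.sqrt ((∑ p : Fin n × Fin m, sb t p ^ 2) +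
          ∑ p : Fin n × Fin m, ab t p ^ 2) < ε) ∧
    (∀ sb ab : ℝ → (Fin n × Fin m → ℝ),
      (∀ t : ℝ, 0 ≤ t → HasDerivAt sb (W.mulVec (fbar n m (sb t)) - sb t - ab t) t) →
      (∀ t : ℝ, 0 ≤ t → HasDerivAt ab (ga • fbar n m (sb t) - α • ab t) t) →
      Filter.Tendsto (fun t : ℝ => (sb t, ab t)) Filter.atTop (nhds (0, 0))) := by
  have : NeZero m := ⟨by omega⟩
  exact (stmt14_general hasFDerivAt_fbarPotential two_pos two_mul_norm_sq_fbar_le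
    (inner_toEuclideanCLM_le hW hmaxev) hα.1 hμ hga).globallyAsymptoticallyStable
end
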